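/- arXiv:1602.03849 — 3 statements merged into one kernel-verified Lean document; each statement's English description precedes it below -/
import Mathlib

section
/- Let P be a Markov kernel on a standard Borel space X, let (u,C) be a drift function with constant b, and let p > 1. Then for every f ∈ E_u^p, every x ∈ X with u(x) < ∞, and every ε ∈ (0,p), the sequence f(X_n)/n^{1/(p−ε)} converges to 0 both ℙ_x-almost everywhere and in L¹(ℙ_x). -/
open MeasureTheory ProbabilityTheory Filter Set
open scoped ENNReal NNReal

/-- The action of a Markov kernel on `[0,∞]`-valued functions: `Pf(x) = ∫ f(y) P(x,dy)`. -/
noncomputable def kernelOp {X : Type*} [MeasurableSpace X] (P : ProbabilityTheory.Kernel X X)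
    (f : X → ℝ≥0∞) : X → ℝ≥0∞ :=
  fun x => ∫⁻ y, f y ∂(P x)

/-- `(u, C)` is a drift function for the Markov kernel `P`, with constant `b`. -/
structure IsDriftFunction {X : Type*} [MeasurableSpace X] (P : ProbabilityTheory.Kernel X X)
    (u : X → ℝ≥0∞) (C : Set X) (b : ℝ≥0) : Prop where
  measurable_u : Measurable u
  one_le : ∀ x, 1 ≤ u x
  measurableSet_C : MeasurableSet C
  bddOn_C : ∃ M : ℝ≥0, ∀ x ∈ C, u x ≤ M
  drift : ∀ x, kernelOp P u x ≤ u x + C.indicator (fun _ => (b : ℝ≥0∞)) x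

/-- `f ∈ E_u^p` with `‖f‖_{E_u^p} ≤ M`. -/
def MemDriftSpace {X : Type*} [MeasurableSpace X] (P : ProbabilityTheory.Kernel X X)
    (u : X → ℝ≥0∞) (C : Set X) (b : ℝ≥0) (p : ℝ) (f : X → ℝ) (M : ℝ≥0) : Prop :=
  Measurable f ∧ ∀ x, (‖f x‖₊ : ℝ≥0∞) ≤
    (M : ℝ≥0∞) * (u x - kernelOp P u x + C.indicator (fun _ => (b : ℝ≥0∞)) x) ^ (1 / p)

/-- `μ` is the law `ℙ_x` on `X^ℕ` of the canonical Markov chain with kernel `P` started at `x`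
(the Ionescu–Tulcea measure): the zeroth coordinate is a.s. `x`, and the Markov property holds:
for every `n`, every nonnegative measurable `g` and every nonnegative `h` measurable with respect
to the first `n+1` coordinates, `𝔼[h · g(X_{n+1})] = 𝔼[h · (Pg)(X_n)]`. -/
def IsCanonicalChain {X : Type*} [MeasurableSpace X] (P : ProbabilityTheory.Kernel X X)
    (x : X) (μ : Measure (ℕ → X)) : Prop :=
  IsProbabilityMeasure μ ∧
  μ.map (fun ω => ω 0) = Measure.dirac x ∧
  ∀ n : ℕ, ∀ g : X → ℝ≥0∞, Measurable g →
    ∀ h : (ℕ → X) → ℝ≥0∞,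
      Measurable[MeasurableSpace.comap (fun (ω : ℕ → X) (i : Fin (n + 1)) => ω i)
        MeasurableSpace.pi] h →
      ∫⁻ ω, h ω * g (ω (n + 1)) ∂μ = ∫⁻ ω, h ω * kernelOp P g (ω n) ∂μ

/-!
Write `v = u - Pu + b·1_C`. The drift inequality gives `v + Pu ≤ u + 2b`, so along the chain
`𝔼 v(X_n) + 𝔼 u(X_{n+1}) ≤ 𝔼 u(X_n) + 2b`. Summing against a summable antitone weight `w`
telescopes to `∑ w_n 𝔼 v(X_n) < ∞`. Since `|f|^p ≤ M^p v`, taking `w_n = n^{-p/(p-ε)}` yields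
`∑ 𝔼 |f(X_n) / n^{1/(p-ε)}|^p < ∞`, which forces convergence to `0` almost everywhere and in `L^p`.
-/

section WeightedTelescoping

lemma sum_mul_add_mul_le_of_antitone {R : Type*} [CommSemiring R] [PartialOrder R]
    [IsOrderedRing R] [CanonicallyOrderedAdd R] {a U w : ℕ → R} {B : R} (hw : Antitone w)
    (h : ∀ n, a n + U (n + 1) ≤ U n + B) (n : ℕ) :
    ∑ k ∈ Finset.range n, w k * a k + w n * U n ≤
      w 0 * U 0 + B * ∑ k ∈ Finset.range n, w k := by
  induction n with
  | zero => simp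
  | succ n ih =>
    rw [Finset.sum_range_succ, Finset.sum_range_succ]
    calc ∑ k ∈ Finset.range n, w k * a k + w n * a n + w (n + 1) * U (n + 1)
        ≤ ∑ k ∈ Finset.range n, w k * a k + w n * a n + w n * U (n + 1) := by
          gcongr
          exact hw n.le_succ
      _ = ∑ k ∈ Finset.range n, w k * a k + w n * (a n + U (n + 1)) := by ring
      _ ≤ ∑ k ∈ Finset.range n, w k * a k + w n * (U n + B) := by
          gcongr _ + w n * ?_
          exact h n
      _ = (∑ k ∈ Finset.range n, w k * a k + w n * U n) + w n * B := by ring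
      _ ≤ (w 0 * U 0 + B * ∑ k ∈ Finset.range n, w k) + w n * B := by gcongr
      _ = w 0 * U 0 + B * (∑ k ∈ Finset.range n, w k + w n) := by ring

lemma tsum_mul_le_of_antitone {a U w : ℕ → ℝ≥0∞} {B : ℝ≥0∞} (hw : Antitone w)
    (h : ∀ n, a n + U (n + 1) ≤ U n + B) :
    ∑' n, w n * a n ≤ w 0 * U 0 + B * ∑' n, w n := by
  rw [ENNReal.tsum_eq_iSup_nat]
  refine iSup_le fun n => ?_
  calc ∑ k ∈ Finset.range n, w k * a k
      ≤ w 0 * U 0 + B * ∑ k ∈ Finset.range n, w k :=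
        le_self_add.trans (sum_mul_add_mul_le_of_antitone hw h n)
    _ ≤ w 0 * U 0 + B * ∑' n, w n := by
        gcongr
        exact ENNReal.sum_le_tsum _

-- `n ^ (-s)` itself is not antitone: it takes the junk value `0` at `n = 0`.
lemma exists_antitone_rpow_neg_le {s : ℝ} (hs : 1 < s) :
    ∃ w : ℕ → ℝ≥0∞, Antitone w ∧ ∑' n, w n ≠ ∞ ∧
      ∀ n : ℕ, ENNReal.ofReal ((n : ℝ) ^ (-s)) ≤ w n := by
  refine ⟨fun n => ENNReal.ofReal ((max n 1 : ℝ) ^ (-s)), ?_, ?_, ?_⟩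
  · intro m n hmn
    refine ENNReal.ofReal_le_ofReal (Real.rpow_le_rpow_of_nonpos (by positivity) ?_ (by linarith))
    gcongr
  · have hsum : Summable fun n : ℕ => (max n 1 : ℝ) ^ (-s) := by
      refine (Real.summable_nat_rpow.2 (neg_lt_neg hs)).congr_atTop ?_
      filter_upwards [eventually_ge_atTop 1] with n hn
      rw [max_eq_left (by exact_mod_cast hn)]
    exact hsum.tsum_ofReal_ne_top
  · intro n
    refine ENNReal.ofReal_le_ofReal ?_
    rcases n.eq_zero_or_pos with rfl | hn
    · simp [Real.zero_rpow (neg_ne_zero.2 (by linarith : s ≠ 0))]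
    · rw [max_eq_left (by exact_mod_cast hn)]

end WeightedTelescoping

section SummableMoments

variable {Ω E : Type*} [MeasurableSpace Ω] [NormedAddCommGroup E] {μ : Measure Ω}
  {F : ℕ → Ω → E} {p : ℝ}

lemma tendsto_ennreal_rpow_const_zero {α : Type*} {l : Filter α} {g : α → ℝ≥0∞} {r : ℝ}
    (hr : 0 < r) (hg : Tendsto g l (nhds 0)) : Tendsto (fun i => g i ^ r) l (nhds 0) := by
  simpa [ENNReal.zero_rpow_of_pos hr] using hg.ennrpow_const r

lemma ae_tendsto_zero_of_tsum_lintegral_enorm_rpow_ne_top (hp : 0 < p)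
    (hF : ∀ n, AEStronglyMeasurable (F n) μ) (hsum : ∑' n, ∫⁻ ω, ‖F n ω‖ₑ ^ p ∂μ ≠ ∞) :
    ∀ᵐ ω ∂μ, Tendsto (fun n => F n ω) atTop (nhds 0) := by
  have hFp : ∀ n, AEMeasurable (fun ω => ‖F n ω‖ₑ ^ p) μ := fun n => (hF n).enorm.pow_const p
  rw [← lintegral_tsum hFp] at hsum
  filter_upwards [ae_lt_top' (AEMeasurable.tsum hFp) hsum] with ω hω
  have hroot := tendsto_ennreal_rpow_const_zero (inv_pos.2 hp)
    (ENNReal.tendsto_atTop_zero_of_tsum_ne_top hω.ne)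
  simp_rw [ENNReal.rpow_rpow_inv hp.ne'] at hroot
  exact tendsto_zero_iff_enorm_tendsto_zero.2 hroot

lemma tendsto_eLpNorm_zero_of_tsum_lintegral_enorm_rpow_ne_top (hp : 0 < p)
    (hsum : ∑' n, ∫⁻ ω, ‖F n ω‖ₑ ^ p ∂μ ≠ ∞) :
    Tendsto (fun n => eLpNorm (F n) (ENNReal.ofReal p) μ) atTop (nhds 0) := by
  have hp' : ENNReal.ofReal p ≠ 0 := (ENNReal.ofReal_pos.2 hp).ne'
  simp_rw [eLpNorm_eq_lintegral_rpow_enorm_toReal hp' ENNReal.ofReal_ne_top,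
    ENNReal.toReal_ofReal hp.le]
  exact tendsto_ennreal_rpow_const_zero (one_div_pos.2 hp)
    (ENNReal.tendsto_atTop_zero_of_tsum_ne_top hsum)

lemma tendsto_integral_norm_zero_of_tendsto_eLpNorm_zero [IsFiniteMeasure μ] {q : ℝ≥0∞}
    (hq : 1 ≤ q) (hF : ∀ n, AEStronglyMeasurable (F n) μ)
    (hlim : Tendsto (fun n => eLpNorm (F n) q μ) atTop (nhds 0)) :
    Tendsto (fun n => ∫ ω, ‖F n ω‖ ∂μ) atTop (nhds 0) := by
  have hexp : 0 ≤ 1 / (1 : ℝ≥0∞).toReal - 1 / q.toReal := by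
    rcases eq_or_ne q ∞ with rfl | hq_top
    · simp
    · have : 1 ≤ q.toReal := by simpa using ENNReal.toReal_mono hq_top hq
      simpa using inv_le_one_of_one_le₀ this
  have hbound := ENNReal.Tendsto.mul_const hlim
    (Or.inr (ENNReal.rpow_ne_top_of_nonneg hexp (measure_ne_top μ univ)))
  rw [zero_mul] at hbound
  have hL1 : Tendsto (fun n => eLpNorm (F n) 1 μ) atTop (nhds 0) :=
    tendsto_of_tendsto_of_tendsto_of_le_of_le tendsto_const_nhds hbound (fun _ => zero_le)
      fun n => eLpNorm_le_eLpNorm_mul_rpow_measure_univ hq (hF n)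
  refine ((ENNReal.tendsto_toReal ENNReal.zero_ne_top).comp hL1).congr fun n => ?_
  rw [Function.comp_apply, eLpNorm_one_eq_lintegral_enorm,
    integral_norm_eq_lintegral_enorm (hF n)]

end SummableMoments

section DriftGap

variable {X : Type*} [MeasurableSpace X] {P : Kernel X X} {u : X → ℝ≥0∞} {C : Set X} {b : ℝ≥0}

/-- The function `u - Pu + b·1_C` whose `p`-th root is the weight of the space `E_u^p`. The
subtraction is truncated at `0`, as in `MemDriftSpace`. -/
noncomputable def driftGap (P : Kernel X X) (u : X → ℝ≥0∞) (C : Set X) (b : ℝ≥0) : X → ℝ≥0∞ :=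
  fun x => u x - kernelOp P u x + C.indicator (fun _ => (b : ℝ≥0∞)) x

lemma driftGap_add_kernelOp_le {x : X}
    (hdrift : kernelOp P u x ≤ u x + C.indicator (fun _ => (b : ℝ≥0∞)) x) :
    driftGap P u C b x + kernelOp P u x ≤ u x + 2 * b := by
  have hb : C.indicator (fun _ => (b : ℝ≥0∞)) x ≤ b :=
    indicator_le_self' (fun _ _ => zero_le) x
  calc driftGap P u C b x + kernelOp P u x
      = max (u x) (kernelOp P u x) + C.indicator (fun _ => (b : ℝ≥0∞)) x := by
        rw [driftGap, add_right_comm, tsub_add_eq_max]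
    _ ≤ u x + b + b := by
        gcongr
        exact max_le le_self_add (hdrift.trans (by gcongr))
    _ = u x + 2 * b := by ring

lemma MemDriftSpace.enorm_rpow_le {p : ℝ} {f : X → ℝ} {M : ℝ≥0}
    (hf : MemDriftSpace P u C b p f M) (hp : 0 < p) (x : X) :
    ‖f x‖ₑ ^ p ≤ (M : ℝ≥0∞) ^ p * driftGap P u C b x :=
  calc ‖f x‖ₑ ^ p ≤ ((M : ℝ≥0∞) * driftGap P u C b x ^ (1 / p)) ^ p := by
        gcongr
        exact hf.2 x
    _ = (M : ℝ≥0∞) ^ p * driftGap P u C b x := by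
        rw [ENNReal.mul_rpow_of_nonneg _ _ hp.le, one_div, ENNReal.rpow_inv_rpow hp.ne']

end DriftGap

section MarkovChain

variable {X Ω : Type*} [MeasurableSpace X] [MeasurableSpace Ω] {P : Kernel X X}
  {u : X → ℝ≥0∞} {C : Set X} {b : ℝ≥0} {μ : Measure Ω}

lemma lintegral_comp_eq_lintegral_kernelOp {Y Z : Ω → X} {g : X → ℝ≥0∞} (hg : Measurable g)
    (hY : Measurable Y) (hZ : Measurable Z) (hYZ : μ.map Z = P ∘ₘ μ.map Y) :
    ∫⁻ ω, g (Z ω) ∂μ = ∫⁻ ω, kernelOp P g (Y ω) ∂μ := by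
  rw [← lintegral_map hg hZ, hYZ, Measure.lintegral_bind P.aemeasurable hg.aemeasurable]
  exact lintegral_map hg.lintegral_kernel hY

lemma lintegral_driftGap_add_le (hu : Measurable u)
    (hdrift : ∀ x, kernelOp P u x ≤ u x + C.indicator (fun _ => (b : ℝ≥0∞)) x) {Y Z : Ω → X}
    (hY : Measurable Y) (hZ : Measurable Z) (hYZ : μ.map Z = P ∘ₘ μ.map Y) :
    ∫⁻ ω, driftGap P u C b (Y ω) ∂μ + ∫⁻ ω, u (Z ω) ∂μ ≤
      ∫⁻ ω, u (Y ω) ∂μ + 2 * b * μ univ := by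
  have hPu : Measurable fun ω => kernelOp P u (Y ω) := hu.lintegral_kernel.comp hY
  calc ∫⁻ ω, driftGap P u C b (Y ω) ∂μ + ∫⁻ ω, u (Z ω) ∂μ
      = ∫⁻ ω, driftGap P u C b (Y ω) + kernelOp P u (Y ω) ∂μ := by
        rw [lintegral_comp_eq_lintegral_kernelOp hu hY hZ hYZ,
          lintegral_add_right _ hPu]
    _ ≤ ∫⁻ ω, u (Y ω) + 2 * b ∂μ :=
        lintegral_mono fun ω => driftGap_add_kernelOp_le (hdrift (Y ω))
    _ = ∫⁻ ω, u (Y ω) ∂μ + 2 * b * μ univ := by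
        rw [lintegral_add_right _ measurable_const, lintegral_const]

variable [IsFiniteMeasure μ] {Y : ℕ → Ω → X}

lemma tsum_mul_lintegral_driftGap_ne_top (hu : Measurable u)
    (hdrift : ∀ x, kernelOp P u x ≤ u x + C.indicator (fun _ => (b : ℝ≥0∞)) x)
    (hY : ∀ n, Measurable (Y n)) (hmarg : ∀ n, μ.map (Y (n + 1)) = P ∘ₘ μ.map (Y n))
    (hu₀ : ∫⁻ ω, u (Y 0 ω) ∂μ ≠ ∞) {w : ℕ → ℝ≥0∞} (hw : Antitone w) (hwsum : ∑' n, w n ≠ ∞) :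
    ∑' n, w n * ∫⁻ ω, driftGap P u C b (Y n ω) ∂μ ≠ ∞ := by
  have hw₀ : w 0 ≠ ∞ := ENNReal.ne_top_of_tsum_ne_top hwsum 0
  refine ne_top_of_le_ne_top ?_ (tsum_mul_le_of_antitone hw fun n =>
    lintegral_driftGap_add_le hu hdrift (hY n) (hY (n + 1)) (hmarg n))
  finiteness

lemma MemDriftSpace.tsum_lintegral_enorm_mul_rpow_ne_top (hu : Measurable u)
    (hdrift : ∀ x, kernelOp P u x ≤ u x + C.indicator (fun _ => (b : ℝ≥0∞)) x)
    (hY : ∀ n, Measurable (Y n)) (hmarg : ∀ n, μ.map (Y (n + 1)) = P ∘ₘ μ.map (Y n))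
    (hu₀ : ∫⁻ ω, u (Y 0 ω) ∂μ ≠ ∞) {p : ℝ} (hp : 0 < p) {f : X → ℝ} {M : ℝ≥0}
    (hf : MemDriftSpace P u C b p f M) {w : ℕ → ℝ≥0∞} (hw : Antitone w)
    (hwsum : ∑' n, w n ≠ ∞) {c : ℕ → ℝ} (hc : ∀ n, ‖c n‖ₑ ^ p ≤ w n) :
    ∑' n, ∫⁻ ω, ‖c n * f (Y n ω)‖ₑ ^ p ∂μ ≠ ∞ := by
  have hMp : (M : ℝ≥0∞) ^ p ≠ ∞ := ENNReal.rpow_ne_top_of_nonneg hp.le ENNReal.coe_ne_top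
  have hbound : ∀ n, ∫⁻ ω, ‖c n * f (Y n ω)‖ₑ ^ p ∂μ ≤
      (M : ℝ≥0∞) ^ p * (w n * ∫⁻ ω, driftGap P u C b (Y n ω) ∂μ) := fun n =>
    calc ∫⁻ ω, ‖c n * f (Y n ω)‖ₑ ^ p ∂μ
        ≤ ∫⁻ ω, w n * ((M : ℝ≥0∞) ^ p * driftGap P u C b (Y n ω)) ∂μ := by
          refine lintegral_mono fun ω => ?_
          rw [enorm_mul, ENNReal.mul_rpow_of_nonneg _ _ hp.le]
          exact mul_le_mul' (hc n) (hf.enorm_rpow_le hp (Y n ω))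
      _ = (M : ℝ≥0∞) ^ p * (w n * ∫⁻ ω, driftGap P u C b (Y n ω) ∂μ) := by
          rw [lintegral_const_mul' _ _ (ENNReal.ne_top_of_tsum_ne_top hwsum n),
            lintegral_const_mul' _ _ hMp, mul_left_comm]
  refine ne_top_of_le_ne_top ?_ (ENNReal.tsum_le_tsum hbound)
  rw [ENNReal.tsum_mul_left]
  exact ENNReal.mul_ne_top hMp
    (tsum_mul_lintegral_driftGap_ne_top hu hdrift hY hmarg hu₀ hw hwsum)

lemma MemDriftSpace.tsum_lintegral_enorm_div_rpow_ne_top (hu : Measurable u)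
    (hdrift : ∀ x, kernelOp P u x ≤ u x + C.indicator (fun _ => (b : ℝ≥0∞)) x)
    (hY : ∀ n, Measurable (Y n)) (hmarg : ∀ n, μ.map (Y (n + 1)) = P ∘ₘ μ.map (Y n))
    (hu₀ : ∫⁻ ω, u (Y 0 ω) ∂μ ≠ ∞) {p : ℝ} (hp : 0 < p) {f : X → ℝ} {M : ℝ≥0}
    (hf : MemDriftSpace P u C b p f M) {r : ℝ} (hr : 1 < r * p) :
    ∑' n : ℕ, ∫⁻ ω, ‖f (Y n ω) / (n : ℝ) ^ r‖ₑ ^ p ∂μ ≠ ∞ := by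
  obtain ⟨w, hw, hwsum, hle⟩ := exists_antitone_rpow_neg_le hr
  simp_rw [div_eq_inv_mul]
  refine hf.tsum_lintegral_enorm_mul_rpow_ne_top hu hdrift hY hmarg hu₀ hp hw hwsum fun n => ?_
  have hn : (0 : ℝ) ≤ n := n.cast_nonneg
  calc ‖((n : ℝ) ^ r)⁻¹‖ₑ ^ p = ENNReal.ofReal ((n : ℝ) ^ (-(r * p))) := by
        rw [Real.enorm_of_nonneg (by positivity), ENNReal.ofReal_rpow_of_nonneg (by positivity)
          hp.le, Real.inv_rpow (by positivity), ← Real.rpow_mul hn, ← Real.rpow_neg hn]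
    _ ≤ w n := hle n

theorem stmt5_general (hu : Measurable u)
    (hdrift : ∀ x, kernelOp P u x ≤ u x + C.indicator (fun _ => (b : ℝ≥0∞)) x)
    (hY : ∀ n, Measurable (Y n)) (hmarg : ∀ n, μ.map (Y (n + 1)) = P ∘ₘ μ.map (Y n))
    (hu₀ : ∫⁻ ω, u (Y 0 ω) ∂μ ≠ ∞) {p : ℝ} {f : X → ℝ} {M : ℝ≥0}
    (hf : MemDriftSpace P u C b p f M) {ε : ℝ} (hε : 0 < ε) (hεp : ε < p) :
    (∀ᵐ ω ∂μ, Tendsto (fun n : ℕ => f (Y n ω) / (n : ℝ) ^ (1 / (p - ε))) atTop (nhds 0)) ∧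
    Tendsto (fun n : ℕ => eLpNorm (fun ω => f (Y n ω) / (n : ℝ) ^ (1 / (p - ε)))
      (ENNReal.ofReal p) μ) atTop (nhds 0) := by
  have hp : 0 < p := hε.trans hεp
  have hexp : 1 < 1 / (p - ε) * p := by
    rw [one_div_mul_eq_div, one_lt_div (sub_pos.2 hεp)]
    exact sub_lt_self p hε
  have hmeas : ∀ n : ℕ, Measurable fun ω => f (Y n ω) / (n : ℝ) ^ (1 / (p - ε)) :=
    fun n => (hf.1.comp (hY n)).div_const _
  have hsum := hf.tsum_lintegral_enorm_div_rpow_ne_top hu hdrift hY hmarg hu₀ hp hexp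
  exact ⟨ae_tendsto_zero_of_tsum_lintegral_enorm_rpow_ne_top hp
      (fun n => (hmeas n).aestronglyMeasurable) hsum,
    tendsto_eLpNorm_zero_of_tsum_lintegral_enorm_rpow_ne_top hp hsum⟩

end MarkovChain

namespace IsCanonicalChain

variable {X : Type*} [MeasurableSpace X] {P : Kernel X X} {x : X} {μ : Measure (ℕ → X)}

lemma lintegral_eval_zero (hμ : IsCanonicalChain P x μ) {g : X → ℝ≥0∞} (hg : Measurable g) :
    ∫⁻ ω, g (ω 0) ∂μ = g x := by
  rw [← lintegral_map hg (measurable_pi_apply 0), hμ.2.1, lintegral_dirac' x hg]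

lemma map_eval_succ (hμ : IsCanonicalChain P x μ) (n : ℕ) :
    μ.map (fun ω => ω (n + 1)) = P ∘ₘ μ.map (fun ω => ω n) := by
  refine Measure.ext_of_lintegral _ fun g hg => ?_
  rw [lintegral_map hg (measurable_pi_apply _),
    Measure.lintegral_bind P.aemeasurable hg.aemeasurable,
    lintegral_map hg.lintegral_kernel (measurable_pi_apply n)]
  simpa only [one_mul, kernelOp] using hμ.2.2 n g hg (fun _ => 1) measurable_const

end IsCanonicalChain

/-- If `(u,C)` is a drift function, `p > 1`, `f ∈ E_u^p`, `u(x) < ∞` and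
`ε ∈ (0,p)`, then `f(X_n)/n^{1/(p−ε)} → 0`, `ℙ_x`-almost everywhere and in `L¹(ℙ_x)`. -/
theorem stmt5 {X : Type*} [MeasurableSpace X] [StandardBorelSpace X]
    (P : ProbabilityTheory.Kernel X X) [IsMarkovKernel P]
    (u : X → ℝ≥0∞) (C : Set X) (b : ℝ≥0) (hu : IsDriftFunction P u C b)
    (p : ℝ) (hp : 1 < p)
    (f : X → ℝ) (M : ℝ≥0) (hf : MemDriftSpace P u C b p f M)
    (x : X) (hx : u x < ∞) (ε : ℝ) (hε : 0 < ε) (hεp : ε < p)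
    (μ : Measure (ℕ → X)) (hμ : IsCanonicalChain P x μ) :
    (∀ᵐ ω ∂μ, Tendsto (fun n : ℕ => f (ω n) / (n : ℝ) ^ (1 / (p - ε))) atTop (nhds 0)) ∧
    Tendsto (fun n : ℕ => ∫ ω, |f (ω n) / (n : ℝ) ^ (1 / (p - ε))| ∂μ) atTop (nhds 0) := by
  have := hμ.1
  obtain ⟨hae, hLp⟩ := stmt5_general hu.measurable_u hu.drift measurable_pi_apply hμ.map_eval_succ
    (by rwa [hμ.lintegral_eval_zero hu.measurable_u, ← lt_top_iff_ne_top]) hf hε hεp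
  exact ⟨hae, tendsto_integral_norm_zero_of_tendsto_eLpNorm_zero (ENNReal.one_le_ofReal.2 hp.le)
    (fun n => ((hf.1.comp (measurable_pi_apply n)).div_const _).aestronglyMeasurable) hLp⟩
end

section
/- Let P be a Markov kernel on a standard Borel space X, let (u,C) be a drift function with constant b, and let p ∈ (1,∞). Then for every f ∈ E_u^p and every x ∈ X with u(x) < ∞, (1/n) ∑_{k=0}^{n−1} (f(X_{k+1}) − Pf(X_k)) converges to 0 both ℙ_x-almost everywhere and in L^p(ℙ_x). -/
open MeasureTheory ProbabilityTheory Filter Set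
open scoped ENNReal NNReal

/-- The action of a Markov kernel on real-valued functions: `Pf(x) = ∫ f(y) P(x,dy)`. -/
noncomputable def kernelOpReal {X : Type*} [MeasurableSpace X] (P : ProbabilityTheory.Kernel X X)
    (f : X → ℝ) : X → ℝ :=
  fun x => ∫ y, f y ∂(P x)

/-!
Let `S` be a martingale with increments `d` in `L^p`. A Taylor estimate gives, for `N ≥ 1`,
`|a + b|^p ≤ (1 + 1/N) |a|^p + p |a|^p a⁻¹ b + A N^(max (p/2) 1 - 1) |b|^p`.
Here `A` depends only on `p`. With `a = S_n` and `b = d_n` the middle term has expectation zero, so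
over `N` steps the factor `(1 + 1/N)^N ≤ e` is harmless. If `∑_{k<n} ‖d_k‖_p^p = O(n)`, this yields
`‖S_n‖_p = O(n^θ)` with `θ = max (p/2) 1 / p < 1`, hence convergence in `L^p`; Doob's maximal
inequality on dyadic blocks and Borel–Cantelli give almost everywhere convergence.

For the chain, conditional expectation contracts `L^p`, so `‖d_k‖_p ≤ 2 ‖f(X_{k+1})‖_p`, and the
linear growth of `∑ ‖f(X_k)‖_p^p` comes from summing the drift inequality along the trajectory:
the expectations of `u` telescope.
-/

section RealInequalities

variable {N p s t : ℝ}

theorem sq_le_inv_add_rpow_mul_rpow (hN : 1 ≤ N) (hp : 1 ≤ p) (hs₀ : 0 ≤ s) (hs₁ : s ≤ 1) :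
    s ^ 2 ≤ N⁻¹ + N ^ (max (p / 2) 1 - 1) * s ^ p := by
  have hN₀ : 0 < N := one_pos.trans_le hN
  obtain rfl | hs := hs₀.eq_or_lt
  · rw [zero_pow two_ne_zero, Real.zero_rpow (one_pos.trans_le hp).ne', mul_zero, add_zero]
    exact (inv_pos.2 hN₀).le
  obtain h2p | hp2 := le_total (p / 2) 1
  · rw [max_eq_right h2p, sub_self, Real.rpow_zero, one_mul, ← Real.rpow_two]
    exact (Real.rpow_le_rpow_of_exponent_ge hs hs₁ (by linarith)).trans
      (le_add_of_nonneg_left (inv_pos.2 hN₀).le)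
  obtain hsN | hNs := le_total (s ^ 2) N⁻¹
  · exact hsN.trans (le_add_of_nonneg_right (by positivity))
  have hsN : 1 ≤ N * s ^ 2 := by rwa [inv_le_iff_one_le_mul₀' hN₀] at hNs
  rw [max_eq_left hp2]
  calc
    s ^ 2 ≤ (N * s ^ 2) ^ (p / 2 - 1) * s ^ 2 :=
      le_mul_of_one_le_left (sq_nonneg s) (Real.one_le_rpow hsN (by linarith))
    _ = N ^ (p / 2 - 1) * s ^ p := by
      rw [Real.mul_rpow hN₀.le (sq_nonneg s), mul_assoc, ← Real.rpow_two, ← Real.rpow_mul hs₀,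
        ← Real.rpow_add hs]
      ring_nf
    _ ≤ N⁻¹ + N ^ (p / 2 - 1) * s ^ p := le_add_of_nonneg_left (inv_pos.2 hN₀).le

theorem abs_one_add_rpow_le_of_mul_abs_le_one (hp : 1 ≤ p) (ht : p * |t| ≤ 1) :
    |1 + t| ^ p ≤ 1 + p * t + (p * |t|) ^ 2 := by
  have hp₀ : 0 < p := one_pos.trans_le hp
  have ht₀ : 0 ≤ 1 + t := by nlinarith [neg_abs_le t, abs_nonneg t]
  have habs : |p * t| = p * |t| := by rw [abs_mul, abs_of_pos hp₀]
  calc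
    |1 + t| ^ p ≤ Real.exp t ^ p := by
      rw [abs_of_nonneg ht₀, add_comm]
      exact Real.rpow_le_rpow (by rwa [add_comm]) (Real.add_one_le_exp t) hp₀.le
    _ = Real.exp (p * t) := by rw [← Real.exp_mul, mul_comm]
    _ ≤ 1 + p * t + (p * |t|) ^ 2 := by
      have h := (abs_le.1 (Real.abs_exp_sub_one_sub_id_le (habs.trans_le ht))).2
      rw [← habs, sq_abs]
      linarith

theorem abs_one_add_rpow_le_of_one_le_mul_abs (hp : 1 ≤ p) (ht : 1 ≤ p * |t|) :
    |1 + t| ^ p ≤ 1 + p * t + ((p + 1) ^ p + p ^ p) * |t| ^ p := by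
  have hp₀ : 0 < p := one_pos.trans_le hp
  have hpow : |1 + t| ^ p ≤ (p + 1) ^ p * |t| ^ p := by
    rw [← Real.mul_rpow (by positivity) (abs_nonneg t)]
    refine Real.rpow_le_rpow (abs_nonneg _) ?_ hp₀.le
    linarith [abs_add_le 1 t, abs_one (α := ℝ)]
  have hlin : -(p * t) ≤ p ^ p * |t| ^ p := by
    rw [← Real.mul_rpow hp₀.le (abs_nonneg t)]
    calc
      -(p * t) ≤ p * |t| := by nlinarith [neg_abs_le t]
      _ ≤ (p * |t|) ^ p := Real.self_le_rpow_of_one_le ht hp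
  linarith

theorem abs_one_add_rpow_le (hN : 1 ≤ N) (hp : 1 ≤ p) (t : ℝ) :
    |1 + t| ^ p ≤ 1 + N⁻¹ + p * t
      + ((p + 1) ^ p + p ^ p) * N ^ (max (p / 2) 1 - 1) * |t| ^ p := by
  have hp₀ : 0 < p := one_pos.trans_le hp
  have hN₀ : 0 ≤ N⁻¹ := inv_nonneg.2 (zero_le_one.trans hN)
  have hNpow : 1 ≤ N ^ (max (p / 2) 1 - 1) :=
    Real.one_le_rpow hN (sub_nonneg.2 (le_max_right _ _))
  obtain ht | ht := le_total (p * |t|) 1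
  · calc
      |1 + t| ^ p ≤ 1 + p * t + (p * |t|) ^ 2 := abs_one_add_rpow_le_of_mul_abs_le_one hp ht
      _ ≤ 1 + p * t + (N⁻¹ + N ^ (max (p / 2) 1 - 1) * (p * |t|) ^ p) := by
        gcongr
        exact sq_le_inv_add_rpow_mul_rpow hN hp (by positivity) ht
      _ = 1 + N⁻¹ + p * t + p ^ p * N ^ (max (p / 2) 1 - 1) * |t| ^ p := by
        rw [Real.mul_rpow hp₀.le (abs_nonneg t)]
        ring
      _ ≤ _ := by
        gcongr
        exact le_add_of_nonneg_left (by positivity)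
  · calc
      |1 + t| ^ p ≤ 1 + p * t + ((p + 1) ^ p + p ^ p) * |t| ^ p :=
        abs_one_add_rpow_le_of_one_le_mul_abs hp ht
      _ ≤ 1 + N⁻¹ + p * t + ((p + 1) ^ p + p ^ p) * N ^ (max (p / 2) 1 - 1) * |t| ^ p := by
        gcongr
        · exact le_add_of_nonneg_right hN₀
        · exact le_mul_of_one_le_right (by positivity) hNpow

/- `|a| ^ p * a⁻¹` is `sign a * |a| ^ (p - 1)`, including the value `0` at `a = 0`. -/
theorem abs_add_rpow_le (hN : 1 ≤ N) (hp : 1 ≤ p) (a b : ℝ) :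
    |a + b| ^ p ≤ (1 + N⁻¹) * |a| ^ p + p * (|a| ^ p * a⁻¹ * b)
      + ((p + 1) ^ p + p ^ p) * N ^ (max (p / 2) 1 - 1) * |b| ^ p := by
  have hp₀ : 0 < p := one_pos.trans_le hp
  obtain rfl | ha := eq_or_ne a 0
  · have hA : 1 ≤ (p + 1) ^ p + p ^ p :=
      (Real.one_le_rpow hp hp₀.le).trans (le_add_of_nonneg_left (by positivity))
    have hNpow : 1 ≤ N ^ (max (p / 2) 1 - 1) :=
      Real.one_le_rpow hN (sub_nonneg.2 (le_max_right _ _))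
    simp only [zero_add, abs_zero, Real.zero_rpow hp₀.ne', mul_zero, zero_mul]
    exact le_mul_of_one_le_left (by positivity) (one_le_mul_of_one_le_of_one_le hA hNpow)
  · have hfactor (c : ℝ) : |c| ^ p = |a| ^ p * |c / a| ^ p := by
      rw [← Real.mul_rpow (abs_nonneg _) (abs_nonneg _), ← abs_mul, mul_div_cancel₀ c ha]
    calc
      |a + b| ^ p = |a| ^ p * |1 + b / a| ^ p := by rw [hfactor (a + b), add_div, div_self ha]
      _ ≤ |a| ^ p * (1 + N⁻¹ + p * (b / a)
          + ((p + 1) ^ p + p ^ p) * N ^ (max (p / 2) 1 - 1) * |b / a| ^ p) := by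
        gcongr
        exact abs_one_add_rpow_le hN hp (b / a)
      _ = _ := by
        rw [hfactor b]
        ring

theorem abs_rpow_mul_inv_mul_le (hp : 1 ≤ p) (a b : ℝ) :
    |(|a| ^ p * a⁻¹ * b)| ≤ |a| ^ p + |b| ^ p := by
  rw [abs_mul, abs_mul, abs_inv, abs_of_nonneg (Real.rpow_nonneg (abs_nonneg a) p)]
  obtain hba | hab := le_total |b| |a|
  · calc
      |a| ^ p * |a|⁻¹ * |b| = |a| ^ p * (|b| / |a|) := by ring
      _ ≤ |a| ^ p := mul_le_of_le_one_right (by positivity) (div_le_one_of_le₀ hba (abs_nonneg a))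
      _ ≤ |a| ^ p + |b| ^ p := le_add_of_nonneg_right (by positivity)
  obtain rfl | ha := eq_or_ne a 0
  · simp only [abs_zero, inv_zero, mul_zero, zero_mul]
    positivity
  have ha₀ : 0 < |a| := abs_pos.2 ha
  have hb₀ : 0 < |b| := ha₀.trans_le hab
  calc
    |a| ^ p * |a|⁻¹ * |b| = |a| ^ (p - 1) * |b| := by
      rw [Real.rpow_sub_one ha₀.ne', div_eq_mul_inv]
    _ ≤ |b| ^ (p - 1) * |b| := by gcongr
    _ = |b| ^ p := by rw [Real.rpow_sub_one hb₀.ne', div_mul_cancel₀ _ hb₀.ne']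
    _ ≤ |a| ^ p + |b| ^ p := le_add_of_nonneg_left (by positivity)

end RealInequalities

section Martingale

open Asymptotics

variable {Ω : Type*} {m m₀ : MeasurableSpace Ω} {μ : Measure Ω} {p : ℝ≥0} {f g S d : Ω → ℝ}

theorem lpNorm_rpow_eq_integral_abs_rpow (hp : p ≠ 0) (hf : AEStronglyMeasurable f μ) :
    lpNorm f p μ ^ (p : ℝ) = ∫ ω, |f ω| ^ (p : ℝ) ∂μ := by
  rw [lpNorm_nnreal_eq_integral_norm_rpow hp hf,
    Real.rpow_inv_rpow (by positivity) (NNReal.coe_ne_zero.2 hp)]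
  rfl

theorem integrable_abs_rpow (hp : p ≠ 0) (hf : MemLp f p μ) :
    Integrable (fun ω => |f ω| ^ (p : ℝ)) μ :=
  hf.integrable_norm_rpow (ENNReal.coe_ne_zero.2 hp) ENNReal.coe_ne_top

theorem integral_mul_eq_zero_of_condExp_eq_zero [IsFiniteMeasure μ] (hm : m ≤ m₀)
    (hg : StronglyMeasurable[m] g) (hd : Integrable d μ) (hgd : Integrable (g * d) μ)
    (hcond : μ[d | m] =ᵐ[μ] 0) :
    ∫ ω, g ω * d ω ∂μ = 0 := by
  have hzero : μ[g * d | m] =ᵐ[μ] 0 := by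
    filter_upwards [condExp_mul_of_stronglyMeasurable_left hg hgd hd, hcond] with ω hpull hω
    rw [hpull, Pi.mul_apply, hω, Pi.zero_apply, mul_zero]
  calc
    ∫ ω, g ω * d ω ∂μ = ∫ ω, (μ[g * d | m]) ω ∂μ := (integral_condExp hm).symm
    _ = 0 := integral_eq_zero_of_ae hzero

theorem lpNorm_add_rpow_le_of_condExp_eq_zero [IsFiniteMeasure μ] (hm : m ≤ m₀) {N : ℝ}
    (hN : 1 ≤ N) (hp : 1 ≤ p) (hS : StronglyMeasurable[m] S) (hSp : MemLp S p μ)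
    (hd : MemLp d p μ) (hcond : μ[d | m] =ᵐ[μ] 0) :
    lpNorm (S + d) p μ ^ (p : ℝ) ≤ (1 + N⁻¹) * lpNorm S p μ ^ (p : ℝ)
      + ((p + 1) ^ (p : ℝ) + p ^ (p : ℝ)) * N ^ (max ((p : ℝ) / 2) 1 - 1)
        * lpNorm d p μ ^ (p : ℝ) := by
  have hp₀ : p ≠ 0 := (one_pos.trans_le hp).ne'
  have hp₁ : (1 : ℝ) ≤ p := by exact_mod_cast hp
  set g : Ω → ℝ := fun ω => |S ω| ^ (p : ℝ) * (S ω)⁻¹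
  have hg : StronglyMeasurable[m] g := by
    have hpow : Measurable fun s : ℝ => |s| ^ (p : ℝ) * s⁻¹ := by fun_prop
    exact (hpow.comp hS.measurable).stronglyMeasurable
  have hSint := integrable_abs_rpow hp₀ hSp
  have hdint := integrable_abs_rpow hp₀ hd
  have hgd : Integrable (g * d) μ :=
    (hSint.add hdint).mono' ((hg.mono hm).aestronglyMeasurable.mul hd.1)
      (.of_forall fun ω => abs_rpow_mul_inv_mul_le hp₁ (S ω) (d ω))
  have hcross : ∫ ω, g ω * d ω ∂μ = 0 :=
    integral_mul_eq_zero_of_condExp_eq_zero hm hg (hd.integrable (by exact_mod_cast hp)) hgd hcond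
  have hgdint : Integrable (fun ω => p * (g ω * d ω)) μ := hgd.const_mul (p : ℝ)
  have hlin : Integrable (fun ω => (1 + N⁻¹) * |S ω| ^ (p : ℝ) + p * (g ω * d ω)) μ :=
    (hSint.const_mul _).add hgdint
  rw [lpNorm_rpow_eq_integral_abs_rpow hp₀ (hSp.add hd).1,
    lpNorm_rpow_eq_integral_abs_rpow hp₀ hSp.1, lpNorm_rpow_eq_integral_abs_rpow hp₀ hd.1]
  calc
    ∫ ω, |(S + d) ω| ^ (p : ℝ) ∂μ ≤ ∫ ω, ((1 + N⁻¹) * |S ω| ^ (p : ℝ) + p * (g ω * d ω)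
        + ((p + 1) ^ (p : ℝ) + p ^ (p : ℝ)) * N ^ (max ((p : ℝ) / 2) 1 - 1)
          * |d ω| ^ (p : ℝ)) ∂μ :=
      integral_mono (integrable_abs_rpow hp₀ (hSp.add hd)) (hlin.add (hdint.const_mul _))
        fun ω => abs_add_rpow_le hN hp₁ (S ω) (d ω)
    _ = _ := by
      rw [integral_add hlin (hdint.const_mul _),
        integral_add (hSint.const_mul _) hgdint, integral_const_mul,
        integral_const_mul, integral_const_mul, hcross, mul_zero, add_zero]

variable {ℱ : Filtration ℕ m₀} {S : ℕ → Ω → ℝ}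

theorem lpNorm_martingale_rpow_le [IsFiniteMeasure μ] (hp : 1 ≤ p) (hS : Martingale S ℱ μ)
    (hSp : ∀ n, MemLp (S n) p μ) {N : ℕ} (hN : 1 ≤ N) :
    lpNorm (S N) p μ ^ (p : ℝ) ≤ Real.exp 1 * (lpNorm (S 0) p μ ^ (p : ℝ)
      + ((p + 1) ^ (p : ℝ) + p ^ (p : ℝ)) * ((N : ℝ) ^ (max ((p : ℝ) / 2) 1 - 1)
        * ∑ k ∈ Finset.range N, lpNorm (S (k + 1) - S k) p μ ^ (p : ℝ))) := by
  have hN₁ : (1 : ℝ) ≤ N := by exact_mod_cast hN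
  have hcond (n : ℕ) : μ[S (n + 1) - S n | ℱ n] =ᵐ[μ] 0 := by
    filter_upwards [condExp_sub (hS.integrable (n + 1)) (hS.integrable n) (ℱ n),
      hS.condExp_ae_eq n.le_succ, hS.condExp_ae_eq le_rfl] with ω hsub hsucc hself
    rw [hsub, Pi.sub_apply, hsucc, hself, sub_self, Pi.zero_apply]
  have hstep (n : ℕ) := lpNorm_add_rpow_le_of_condExp_eq_zero (ℱ.le n) hN₁ hp
    (hS.stronglyAdapted n) (hSp n) ((hSp (n + 1)).sub (hSp n)) (hcond n)
  simp only [add_sub_cancel] at hstep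
  have hgronwall := discrete_gronwall (n₀ := 0)
    (u := fun n => lpNorm (S n) p μ ^ (p : ℝ)) (c := fun _ => (N : ℝ)⁻¹)
    (Real.rpow_nonneg lpNorm_nonneg _) (fun n _ => hstep n) (fun _ _ => by positivity)
    (fun _ _ => mul_nonneg (by positivity) (Real.rpow_nonneg lpNorm_nonneg _)) N.zero_le
  rw [mul_comm]
  simpa only [← mul_assoc, ← Finset.range_eq_Ico, ← Finset.mul_sum, Finset.sum_const,
    Finset.card_range, nsmul_eq_mul, mul_inv_cancel₀ (one_pos.trans_le hN₁).ne'] using hgronwall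

theorem lpNorm_martingale_isBigO [IsFiniteMeasure μ] (hp : 1 ≤ p) (hS : Martingale S ℱ μ)
    (hSp : ∀ n, MemLp (S n) p μ)
    (hinc : (fun n : ℕ => ∑ k ∈ Finset.range n, lpNorm (S (k + 1) - S k) p μ ^ (p : ℝ))
      =O[atTop] fun n => (n : ℝ)) :
    (fun n : ℕ => lpNorm (S n) p μ) =O[atTop]
      fun n => (n : ℝ) ^ (max ((p : ℝ) / 2) 1 / p) := by
  have hp₀ : (0 : ℝ) < p := by exact_mod_cast one_pos.trans_le hp
  set q : ℝ := max ((p : ℝ) / 2) 1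
  have hq₀ : 0 < q := one_pos.trans_le (le_max_right _ _)
  have hconst : (fun _ : ℕ => lpNorm (S 0) p μ ^ (p : ℝ)) =O[atTop] fun n => (n : ℝ) ^ q :=
    (isLittleO_const_left.2 <| .inr <| tendsto_norm_atTop_atTop.comp <|
      (tendsto_rpow_atTop hq₀).comp tendsto_natCast_atTop_atTop).isBigO
  have hsum : (fun n : ℕ => (n : ℝ) ^ (q - 1) * ∑ k ∈ Finset.range n,
      lpNorm (S (k + 1) - S k) p μ ^ (p : ℝ)) =O[atTop] fun n => (n : ℝ) ^ q := by
    refine ((isBigO_refl _ _).mul hinc).congr' .rfl ?_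
    filter_upwards [eventually_ne_atTop 0] with n hn
    rw [← Real.rpow_add_one (Nat.cast_ne_zero.2 hn), sub_add_cancel]
  have hpow : (fun n : ℕ => lpNorm (S n) p μ ^ (p : ℝ)) =O[atTop] fun n => (n : ℝ) ^ q := by
    refine .trans (.of_bound' ?_) ((hconst.add (hsum.const_mul_left
      ((p + 1) ^ (p : ℝ) + p ^ (p : ℝ)))).const_mul_left (Real.exp 1))
    filter_upwards [eventually_ge_atTop 1] with n hn
    rw [Real.norm_of_nonneg (Real.rpow_nonneg lpNorm_nonneg _)]
    exact (lpNorm_martingale_rpow_le hp hS hSp hn).trans (le_abs_self _)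
  have hroot := hpow.rpow (inv_nonneg.2 hp₀.le) (.of_forall fun n => by positivity)
  simpa only [Real.rpow_rpow_inv lpNorm_nonneg hp₀.ne', ← Real.rpow_mul (Nat.cast_nonneg _),
    ← div_eq_mul_inv] using hroot

theorem isBigO_rpow_of_eventually_dyadic {a : ℕ → ℝ} {γ : ℝ} (hγ : 0 ≤ γ)
    (ha : ∀ᶠ j in atTop, ∀ k ≤ 2 ^ j, |a k| ≤ ((2 : ℝ) ^ j) ^ γ) :
    a =O[atTop] fun n => (n : ℝ) ^ γ := by
  refine .of_bound (2 ^ γ) ?_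
  obtain ⟨J, hJ⟩ := eventually_atTop.1 ha
  filter_upwards [eventually_ge_atTop (2 ^ J)] with n hn
  have hlog : J ≤ Nat.log 2 n + 1 := (Nat.le_log_of_pow_le one_lt_two hn).trans (Nat.le_succ _)
  have hpow : (2 : ℝ) ^ (Nat.log 2 n + 1) ≤ 2 * n := by
    rw [pow_succ']
    gcongr
    exact_mod_cast Nat.pow_log_le_self 2 (Nat.two_pow_pos J |>.trans_le hn).ne'
  calc
    |a n| ≤ ((2 : ℝ) ^ (Nat.log 2 n + 1)) ^ γ :=
      hJ _ hlog n (Nat.lt_pow_succ_log_self one_lt_two n).le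
    _ ≤ (2 * n : ℝ) ^ γ := Real.rpow_le_rpow (by positivity) hpow hγ
    _ = 2 ^ γ * ‖(n : ℝ) ^ γ‖ := by
      rw [Real.mul_rpow zero_le_two n.cast_nonneg, Real.norm_of_nonneg (by positivity)]

theorem measure_exists_le_submartingale_le [IsFiniteMeasure μ] (hS : Submartingale S ℱ μ)
    (hS₀ : 0 ≤ S) {ε : ℝ} (hε : 0 < ε) (n : ℕ) :
    μ {ω | ∃ k ≤ n, ε ≤ S k ω} ≤ ENNReal.ofReal (ε⁻¹ * ∫ ω, S n ω ∂μ) := by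
  lift ε to ℝ≥0 using hε.le
  have hset : {ω | ∃ k ≤ n, ε ≤ S k ω}
      = {ω | (ε : ℝ) ≤ (Finset.range (n + 1)).sup' Finset.nonempty_range_add_one
          fun k => S k ω} := by
    ext ω
    simp only [mem_ofPred_eq, Finset.le_sup'_iff, Finset.mem_range, Nat.lt_succ_iff]
  have hmax := (maximal_ineq hS hS₀ (ε := ε) n).trans
    (ENNReal.ofReal_le_ofReal (setIntegral_le_integral (hS.integrable n) (.of_forall (hS₀ n))))
  rw [hset, ENNReal.ofReal_mul (by positivity), ENNReal.ofReal_inv_of_pos hε,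
    ENNReal.ofReal_coe_nnreal]
  exact (ENNReal.mul_le_iff_le_inv (by exact_mod_cast hε.ne') ENNReal.coe_ne_top).1 hmax

theorem ae_isBigO_of_integral_submartingale_isBigO [IsFiniteMeasure μ] {θ γ : ℝ}
    (hS : Submartingale S ℱ μ) (hS₀ : 0 ≤ S)
    (hint : (fun n : ℕ => ∫ ω, S n ω ∂μ) =O[atTop] fun n => (n : ℝ) ^ θ)
    (hγ : 0 ≤ γ) (hθγ : θ < γ) :
    ∀ᵐ ω ∂μ, (fun n => S n ω) =O[atTop] fun n => (n : ℝ) ^ γ := by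
  obtain ⟨B, -, hB⟩ := bound_of_isBigO_nat_atTop hint
  set A : ℕ → Set Ω := fun j => {ω | ∃ k ≤ 2 ^ j, ((2 : ℝ) ^ j) ^ γ ≤ S k ω}
  have hA (j : ℕ) : μ (A j) ≤ ENNReal.ofReal (B * ((2 : ℝ) ^ (θ - γ)) ^ j) := by
    have hpos : (0 : ℝ) < 2 ^ j := by positivity
    have hBj := (le_abs_self _).trans (hB (x := 2 ^ j) (by positivity))
    refine (measure_exists_le_submartingale_le hS hS₀ (by positivity) (2 ^ j)).trans ?_
    refine ENNReal.ofReal_le_ofReal ?_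
    calc
      (((2 : ℝ) ^ j) ^ γ)⁻¹ * ∫ ω, S (2 ^ j) ω ∂μ
          ≤ (((2 : ℝ) ^ j) ^ γ)⁻¹ * (B * ((2 : ℝ) ^ j) ^ θ) := by
        gcongr
        simpa [abs_of_nonneg (Real.rpow_nonneg hpos.le θ)] using hBj
      _ = B * ((2 : ℝ) ^ j) ^ (θ - γ) := by
        rw [Real.rpow_sub hpos]
        ring
      _ = B * ((2 : ℝ) ^ (θ - γ)) ^ j := by rw [Real.rpow_pow_comm zero_le_two]
  have hsummable : Summable fun j : ℕ => B * ((2 : ℝ) ^ (θ - γ)) ^ j :=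
    (summable_geometric_of_lt_one (by positivity)
      (Real.rpow_lt_one_of_one_lt_of_neg one_lt_two (sub_neg.2 hθγ))).mul_left B
  have htsum : ∑' j, μ (A j) ≠ ∞ :=
    ne_top_of_le_ne_top hsummable.tsum_ofReal_ne_top (ENNReal.tsum_le_tsum hA)
  filter_upwards [ae_eventually_notMem htsum] with ω hω
  refine isBigO_rpow_of_eventually_dyadic hγ ?_
  filter_upwards [hω] with j hj k hk
  rw [abs_of_nonneg (hS₀ k ω)]
  exact (not_le.1 fun hle => hj ⟨k, hk, hle⟩).le

theorem max_half_one_div_lt_one {q : ℝ} (hq : 1 < q) : max (q / 2) 1 / q < 1 :=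
  (div_lt_one (one_pos.trans hq)).2 (max_lt (half_lt_self (one_pos.trans hq)) hq)

theorem isLittleO_natCast_rpow_natCast {γ : ℝ} (hγ : γ < 1) :
    (fun n : ℕ => (n : ℝ) ^ γ) =o[atTop] fun n => (n : ℝ) := by
  have hlim : Tendsto (fun n : ℕ => (n : ℝ) ^ (-(1 - γ))) atTop (nhds 0) :=
    (tendsto_rpow_neg_atTop (sub_pos.2 hγ)).comp tendsto_natCast_atTop_atTop
  refine (isLittleO_iff_tendsto' ?_).2 (hlim.congr' ?_)
  all_goals filter_upwards [eventually_ne_atTop 0] with n hn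
  · exact fun h => absurd h (Nat.cast_ne_zero.2 hn)
  · rw [neg_sub, Real.rpow_sub_one (Nat.cast_ne_zero.2 hn)]

theorem integral_abs_isBigO_lpNorm [IsFiniteMeasure μ] (hp : 1 ≤ p)
    (hSp : ∀ n, MemLp (S n) p μ) :
    (fun n : ℕ => ∫ ω, |S n ω| ∂μ) =O[atTop] fun n => lpNorm (S n) p μ := by
  have hp₁ : (1 : ℝ≥0∞) ≤ p := by exact_mod_cast hp
  have hexp : 0 ≤ 1 / (1 : ℝ≥0∞).toReal - 1 / (p : ℝ≥0∞).toReal :=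
    sub_nonneg.2 (one_div_le_one_div_of_le (by norm_num) (ENNReal.toReal_mono (by simp) hp₁))
  have htop := ENNReal.rpow_ne_top_of_nonneg hexp (measure_ne_top μ univ)
  refine .of_bound (μ univ ^ (1 / (1 : ℝ≥0∞).toReal - 1 / (p : ℝ≥0∞).toReal)).toReal
    (.of_forall fun n => ?_)
  have hle := ENNReal.toReal_mono (ENNReal.mul_ne_top (hSp n).eLpNorm_ne_top htop)
    (eLpNorm_le_eLpNorm_mul_rpow_measure_univ hp₁ (hSp n).1)
  rw [toReal_eLpNorm (hSp n).1, ENNReal.toReal_mul, toReal_eLpNorm (hSp n).1,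
    lpNorm_one_eq_integral_norm (hSp n).1, mul_comm] at hle
  rwa [Real.norm_of_nonneg (by positivity), Real.norm_of_nonneg lpNorm_nonneg]

theorem lpNorm_martingale_isLittleO [IsFiniteMeasure μ] (hp : 1 < p) (hS : Martingale S ℱ μ)
    (hSp : ∀ n, MemLp (S n) p μ)
    (hinc : (fun n : ℕ => ∑ k ∈ Finset.range n, lpNorm (S (k + 1) - S k) p μ ^ (p : ℝ))
      =O[atTop] fun n => (n : ℝ)) :
    (fun n : ℕ => lpNorm (S n) p μ) =o[atTop] fun n => (n : ℝ) :=
  (lpNorm_martingale_isBigO hp.le hS hSp hinc).trans_isLittleO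
    (isLittleO_natCast_rpow_natCast (max_half_one_div_lt_one (by exact_mod_cast hp)))

theorem ae_martingale_isLittleO [IsFiniteMeasure μ] (hp : 1 < p) (hS : Martingale S ℱ μ)
    (hSp : ∀ n, MemLp (S n) p μ)
    (hinc : (fun n : ℕ => ∑ k ∈ Finset.range n, lpNorm (S (k + 1) - S k) p μ ^ (p : ℝ))
      =O[atTop] fun n => (n : ℝ)) :
    ∀ᵐ ω ∂μ, (fun n => S n ω) =o[atTop] fun n => (n : ℝ) := by
  obtain ⟨γ, hθγ, hγ⟩ := exists_between (max_half_one_div_lt_one (by exact_mod_cast hp))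
  have habs : Submartingale (fun n ω => |S n ω|) ℱ μ :=
    hS.submartingale.sup hS.neg.submartingale
  have hint : (fun n : ℕ => ∫ ω, |S n ω| ∂μ) =O[atTop]
      fun n => (n : ℝ) ^ (max ((p : ℝ) / 2) 1 / p) :=
    (integral_abs_isBigO_lpNorm hp.le hSp).trans (lpNorm_martingale_isBigO hp.le hS hSp hinc)
  have hγ₀ : 0 ≤ γ := (by positivity : (0 : ℝ) ≤ max ((p : ℝ) / 2) 1 / p).trans hθγ.le
  filter_upwards [ae_isBigO_of_integral_submartingale_isBigO habs
    (fun n ω => abs_nonneg (S n ω)) hint hγ₀ hθγ] with ω hω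
  exact hω.of_abs_left.trans_isLittleO (isLittleO_natCast_rpow_natCast hγ)

theorem tendsto_eLpNorm_inv_mul_of_isLittleO {q : ℝ≥0∞} {S : ℕ → Ω → ℝ}
    (hSq : ∀ n, MemLp (S n) q μ)
    (hS : (fun n => lpNorm (S n) q μ) =o[atTop] fun n : ℕ => (n : ℝ)) :
    Tendsto (fun n : ℕ => eLpNorm (fun ω => (n : ℝ)⁻¹ * S n ω) q μ) atTop (nhds 0) := by
  have hlim := ENNReal.tendsto_ofReal hS.tendsto_div_nhds_zero
  rw [ENNReal.ofReal_zero] at hlim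
  refine hlim.congr fun n => ?_
  rw [div_eq_inv_mul, ENNReal.ofReal_mul (by positivity), ofReal_lpNorm (hSq n),
    ← Real.enorm_of_nonneg (by positivity), ← eLpNorm_const_smul]
  rfl

end Martingale

section Chain

open Asymptotics

variable {X : Type*} [MeasurableSpace X]

theorem measurable_piLE_eval {k n : ℕ} (h : k ≤ n) :
    Measurable[Filtration.piLE (X := fun _ : ℕ => X) n] fun ω : ℕ → X => ω k :=
  (measurable_pi_apply (⟨k, h⟩ : Iic n)).comp (comap_measurable (Preorder.restrictLe n))

theorem piLE_le_comap_fin (n : ℕ) :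
    Filtration.piLE (X := fun _ : ℕ => X) n
      ≤ MeasurableSpace.comap (fun (ω : ℕ → X) (i : Fin (n + 1)) => ω i) MeasurableSpace.pi := by
  have hreindex : Measurable fun (v : Fin (n + 1) → X) (i : Iic n) =>
      v ⟨i, Nat.lt_succ_of_le i.2⟩ :=
    measurable_pi_lambda _ fun _ => measurable_pi_apply _
  exact measurable_iff_comap_le.1 (hreindex.comp (comap_measurable _))

variable {P : Kernel X X} {x : X} {μ : Measure (ℕ → X)} {f : X → ℝ} {g u v : X → ℝ≥0∞}
  {q : ℝ≥0∞} {p c M : ℝ≥0}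

namespace IsCanonicalChain

theorem lintegral_zero (hμ : IsCanonicalChain P x μ) (hg : Measurable g) :
    ∫⁻ ω, g (ω 0) ∂μ = g x := by
  rw [← lintegral_map hg (measurable_pi_apply 0), hμ.2.1, lintegral_dirac' x hg]

theorem setLIntegral_succ (hμ : IsCanonicalChain P x μ) {n : ℕ} {s : Set (ℕ → X)}
    (hs : MeasurableSet[Filtration.piLE (X := fun _ : ℕ => X) n] s) (hg : Measurable g) :
    ∫⁻ ω in s, g (ω (n + 1)) ∂μ = ∫⁻ ω in s, kernelOp P g (ω n) ∂μ := by
  classical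
  have hstep := hμ.2.2 n g hg (s.indicator 1)
    ((measurable_const (a := (1 : ℝ≥0∞))).indicator (piLE_le_comap_fin n s hs))
  simpa only [← lintegral_indicator (Filtration.piLE.le n s hs), indicator_apply, Pi.one_apply,
    ite_mul, one_mul, zero_mul] using hstep

theorem lintegral_succ (hμ : IsCanonicalChain P x μ) (n : ℕ) (hg : Measurable g) :
    ∫⁻ ω, g (ω (n + 1)) ∂μ = ∫⁻ ω, kernelOp P g (ω n) ∂μ := by
  simpa only [Measure.restrict_univ] using hμ.setLIntegral_succ MeasurableSet.univ hg

theorem map_restrict_succ (hμ : IsCanonicalChain P x μ) {n : ℕ} {s : Set (ℕ → X)}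
    (hs : MeasurableSet[Filtration.piLE (X := fun _ : ℕ => X) n] s) :
    (μ.restrict s).map (fun ω => ω (n + 1)) = P ∘ₘ (μ.restrict s).map (fun ω => ω n) := by
  refine Measure.ext_of_lintegral _ fun g hg => ?_
  rw [Measure.lintegral_bind P.aemeasurable hg.aemeasurable,
    lintegral_map hg (measurable_pi_apply _),
    lintegral_map hg.lintegral_kernel (measurable_pi_apply _)]
  exact hμ.setLIntegral_succ hs hg

theorem integrable_kernelOpReal (hμ : IsCanonicalChain P x μ) {n : ℕ} (hf : Measurable f)
    (hint : Integrable (fun ω => f (ω (n + 1))) μ) :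
    Integrable (fun ω => kernelOpReal P f (ω n)) μ := by
  have hcomp : Integrable f (P ∘ₘ μ.map fun ω => ω n) := by
    have hmap := hμ.map_restrict_succ (n := n) MeasurableSet.univ
    rw [Measure.restrict_univ] at hmap
    rw [← hmap]
    exact (integrable_map_measure hf.aestronglyMeasurable
      (measurable_pi_apply _).aemeasurable).2 hint
  rw [Measure.comp_eq_comp_const_apply] at hcomp
  exact hcomp.integral_comp.comp_measurable (measurable_pi_apply n)

theorem setIntegral_succ (hμ : IsCanonicalChain P x μ) {n : ℕ} {s : Set (ℕ → X)}
    (hs : MeasurableSet[Filtration.piLE (X := fun _ : ℕ => X) n] s) (hf : Measurable f)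
    (hint : IntegrableOn (fun ω => f (ω (n + 1))) s μ) :
    ∫ ω in s, f (ω (n + 1)) ∂μ = ∫ ω in s, kernelOpReal P f (ω n) ∂μ := by
  have hcomp : Integrable f (P ∘ₘ (μ.restrict s).map fun ω => ω n) := by
    rw [← hμ.map_restrict_succ hs]
    exact (integrable_map_measure hf.aestronglyMeasurable
      (measurable_pi_apply _).aemeasurable).2 hint
  calc
    ∫ ω in s, f (ω (n + 1)) ∂μ = ∫ y, f y ∂(P ∘ₘ (μ.restrict s).map fun ω => ω n) := by
      rw [← hμ.map_restrict_succ hs,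
        integral_map (measurable_pi_apply _).aemeasurable hf.aestronglyMeasurable]
    _ = ∫ y, kernelOpReal P f y ∂((μ.restrict s).map fun ω => ω n) := by
      rw [Measure.comp_eq_comp_const_apply] at hcomp ⊢
      exact Kernel.integral_comp hcomp
    _ = ∫ ω in s, kernelOpReal P f (ω n) ∂μ :=
      integral_map (measurable_pi_apply _).aemeasurable
        hf.stronglyMeasurable.integral_kernel.aestronglyMeasurable

theorem condExp_succ (hμ : IsCanonicalChain P x μ) {n : ℕ} (hf : Measurable f)
    (hint : Integrable (fun ω => f (ω (n + 1))) μ) :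
    μ[fun ω => f (ω (n + 1)) | Filtration.piLE (X := fun _ : ℕ => X) n]
      =ᵐ[μ] fun ω => kernelOpReal P f (ω n) := by
  have := hμ.1
  have hadapted : StronglyMeasurable[Filtration.piLE (X := fun _ : ℕ => X) n]
      fun ω : ℕ → X => kernelOpReal P f (ω n) :=
    hf.stronglyMeasurable.integral_kernel.comp_measurable (measurable_piLE_eval le_rfl)
  exact (ae_eq_condExp_of_forall_setIntegral_eq (Filtration.piLE.le n) hint
    (fun _ _ _ => (hμ.integrable_kernelOpReal hf hint).integrableOn)
    (fun _ hs _ => (hμ.setIntegral_succ hs hf hint.integrableOn).symm)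
    hadapted.aestronglyMeasurable).symm

theorem memLp_kernelOpReal (hμ : IsCanonicalChain P x μ) {n : ℕ} (hq : 1 ≤ q) (hf : Measurable f)
    (hfq : MemLp (fun ω => f (ω (n + 1))) q μ) :
    MemLp (fun ω => kernelOpReal P f (ω n)) q μ := by
  have := hμ.1
  exact (hfq.condExp hq).ae_eq (hμ.condExp_succ hf (hfq.integrable hq))

theorem lpNorm_kernelOpReal_le (hμ : IsCanonicalChain P x μ) {n : ℕ} (hq : 1 ≤ q)
    (hf : Measurable f) (hfq : MemLp (fun ω => f (ω (n + 1))) q μ) :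
    lpNorm (fun ω => kernelOpReal P f (ω n)) q μ ≤ lpNorm (fun ω => f (ω (n + 1))) q μ := by
  have := hμ.1
  calc
    _ = lpNorm (μ[fun ω => f (ω (n + 1)) | Filtration.piLE (X := fun _ : ℕ => X) n]) q μ := by
      rw [← toReal_eLpNorm (hμ.memLp_kernelOpReal hq hf hfq).aestronglyMeasurable,
        ← toReal_eLpNorm (hfq.condExp hq).aestronglyMeasurable,
        eLpNorm_congr_ae (hμ.condExp_succ hf (hfq.integrable hq))]
    _ ≤ _ := hfq.lpNorm_condExp_le_lpNorm hq

end IsCanonicalChain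

/-- The martingale `∑_{k<n} (f(X_{k+1}) − Pf(X_k))` of the canonical chain, as a function of the
time `n` and the trajectory `ω`. -/
noncomputable def chainMartingale (P : Kernel X X) (f : X → ℝ) (n : ℕ) (ω : ℕ → X) : ℝ :=
  ∑ k ∈ Finset.range n, (f (ω (k + 1)) - kernelOpReal P f (ω k))

theorem chainMartingale_succ_sub (n : ℕ) :
    chainMartingale P f (n + 1) - chainMartingale P f n
      = (fun ω => f (ω (n + 1))) - fun ω => kernelOpReal P f (ω n) := by
  ext ω
  simp only [Pi.sub_apply, chainMartingale, Finset.sum_range_succ, add_sub_cancel_left]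

theorem stronglyAdapted_chainMartingale (hf : Measurable f) :
    StronglyAdapted (Filtration.piLE (X := fun _ : ℕ => X)) (chainMartingale P f) := by
  intro n
  refine Finset.stronglyMeasurable_fun_sum _ fun k hk => .sub ?_ ?_
  · exact hf.stronglyMeasurable.comp_measurable
      (measurable_piLE_eval (Nat.succ_le_of_lt (Finset.mem_range.1 hk)))
  · exact hf.stronglyMeasurable.integral_kernel.comp_measurable
      (measurable_piLE_eval (Finset.mem_range.1 hk).le)

namespace IsCanonicalChain

theorem memLp_chainMartingale (hμ : IsCanonicalChain P x μ) (hq : 1 ≤ q) (hf : Measurable f)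
    (hfq : ∀ n, MemLp (fun ω => f (ω n)) q μ) (n : ℕ) : MemLp (chainMartingale P f n) q μ :=
  memLp_finsetSum _ fun k _ => (hfq (k + 1)).sub (hμ.memLp_kernelOpReal hq hf (hfq (k + 1)))

theorem martingale_chainMartingale (hμ : IsCanonicalChain P x μ) (hf : Measurable f)
    (hint : ∀ n, Integrable (fun ω => f (ω n)) μ) :
    Martingale (chainMartingale P f) Filtration.piLE μ := by
  have := hμ.1
  have hPf (n : ℕ) := hμ.integrable_kernelOpReal hf (hint (n + 1))
  refine martingale_of_condExp_sub_eq_zero_nat (stronglyAdapted_chainMartingale hf)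
    (fun n => integrable_finsetSum _ fun k _ => (hint (k + 1)).sub (hPf k)) fun n => ?_
  have hadapted : StronglyMeasurable[Filtration.piLE (X := fun _ : ℕ => X) n]
      fun ω : ℕ → X => kernelOpReal P f (ω n) :=
    hf.stronglyMeasurable.integral_kernel.comp_measurable (measurable_piLE_eval le_rfl)
  rw [chainMartingale_succ_sub]
  filter_upwards [condExp_sub (hint (n + 1)) (hPf n) (Filtration.piLE n),
    hμ.condExp_succ hf (hint (n + 1))] with ω hsub hsucc
  rw [hsub, Pi.sub_apply, hsucc,
    condExp_of_stronglyMeasurable (Filtration.piLE.le n) hadapted (hPf n), sub_self, Pi.zero_apply]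

theorem lpNorm_chainMartingale_succ_sub_le (hμ : IsCanonicalChain P x μ) (hq : 1 ≤ q)
    (hf : Measurable f) {n : ℕ} (hfq : MemLp (fun ω => f (ω (n + 1))) q μ) :
    lpNorm (chainMartingale P f (n + 1) - chainMartingale P f n) q μ
      ≤ 2 * lpNorm (fun ω => f (ω (n + 1))) q μ := by
  rw [chainMartingale_succ_sub, two_mul]
  exact (lpNorm_sub_le hfq hq).trans (add_le_add_right (hμ.lpNorm_kernelOpReal_le hq hf hfq) _)

theorem sum_lintegral_add_lintegral_le (hμ : IsCanonicalChain P x μ) (hu : Measurable u)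
    (hv : ∀ y, v y + kernelOp P u y ≤ u y + c) (n : ℕ) :
    ∑ k ∈ Finset.range n, ∫⁻ ω, v (ω k) ∂μ + ∫⁻ ω, u (ω n) ∂μ ≤ u x + n * c := by
  have := hμ.1
  have hstep (n : ℕ) :
      ∫⁻ ω, v (ω n) ∂μ + ∫⁻ ω, u (ω (n + 1)) ∂μ ≤ ∫⁻ ω, u (ω n) ∂μ + c := by
    have hPu : Measurable fun ω : ℕ → X => kernelOp P u (ω n) :=
      hu.lintegral_kernel.comp (measurable_pi_apply n)
    calc
      _ = ∫⁻ ω, (v (ω n) + kernelOp P u (ω n)) ∂μ := by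
        rw [hμ.lintegral_succ n hu, lintegral_add_right _ hPu]
      _ ≤ ∫⁻ ω, (u (ω n) + c) ∂μ := lintegral_mono fun ω => hv (ω n)
      _ = ∫⁻ ω, u (ω n) ∂μ + c := by
        rw [lintegral_add_right _ measurable_const, lintegral_const, measure_univ, mul_one]
  induction n with
  | zero => simp [hμ.lintegral_zero hu]
  | succ n ih =>
    rw [Finset.sum_range_succ, add_assoc]
    calc
      _ ≤ ∑ k ∈ Finset.range n, ∫⁻ ω, v (ω k) ∂μ + (∫⁻ ω, u (ω n) ∂μ + c) := by
        exact add_le_add_right (hstep n) _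
      _ ≤ u x + n * c + c := by
        rw [← add_assoc]
        gcongr
      _ = u x + (n + 1 : ℕ) * c := by
        push_cast
        ring

theorem sum_eLpNorm_rpow_le (hμ : IsCanonicalChain P x μ) (hu : Measurable u)
    (hv : ∀ y, v y + kernelOp P u y ≤ u y + c) (hp : p ≠ 0)
    (hfv : ∀ y, ‖f y‖ₑ ≤ M * v y ^ (1 / (p : ℝ))) (n : ℕ) :
    ∑ k ∈ Finset.range n, eLpNorm (fun ω => f (ω k)) p μ ^ (p : ℝ)
      ≤ (M : ℝ≥0∞) ^ (p : ℝ) * (u x + n * c) := by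
  have hfv_rpow (y : X) : ‖f y‖ₑ ^ (p : ℝ) ≤ (M : ℝ≥0∞) ^ (p : ℝ) * v y := by
    calc
      ‖f y‖ₑ ^ (p : ℝ) ≤ (M * v y ^ (1 / (p : ℝ))) ^ (p : ℝ) := by
        gcongr
        exact hfv y
      _ = (M : ℝ≥0∞) ^ (p : ℝ) * v y := by
        rw [ENNReal.mul_rpow_of_nonneg _ _ p.coe_nonneg, one_div,
          ENNReal.rpow_inv_rpow (NNReal.coe_ne_zero.2 hp)]
  calc
    _ = ∑ k ∈ Finset.range n, ∫⁻ ω, ‖f (ω k)‖ₑ ^ (p : ℝ) ∂μ := by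
      simp only [eLpNorm_nnreal_pow_eq_lintegral hp]
    _ ≤ ∑ k ∈ Finset.range n, (M : ℝ≥0∞) ^ (p : ℝ) * ∫⁻ ω, v (ω k) ∂μ := by
      refine Finset.sum_le_sum fun k _ => ?_
      rw [← lintegral_const_mul' _ _
        (ENNReal.rpow_ne_top_of_nonneg p.coe_nonneg ENNReal.coe_ne_top)]
      exact lintegral_mono fun ω => hfv_rpow (ω k)
    _ ≤ (M : ℝ≥0∞) ^ (p : ℝ) * (u x + n * c) := by
      rw [← Finset.mul_sum]
      gcongr
      exact le_self_add.trans (hμ.sum_lintegral_add_lintegral_le hu hv n)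

theorem memLp_comp_eval (hμ : IsCanonicalChain P x μ) (hu : Measurable u) (hx : u x ≠ ∞)
    (hv : ∀ y, v y + kernelOp P u y ≤ u y + c) (hp : p ≠ 0) (hf : Measurable f)
    (hfv : ∀ y, ‖f y‖ₑ ≤ M * v y ^ (1 / (p : ℝ))) (n : ℕ) :
    MemLp (fun ω => f (ω n)) p μ := by
  refine ⟨(hf.comp (measurable_pi_apply n)).aestronglyMeasurable, ?_⟩
  rw [← ENNReal.rpow_lt_top_iff_of_pos (NNReal.coe_pos.2 (pos_iff_ne_zero.2 hp))]
  calc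
    _ ≤ ∑ k ∈ Finset.range (n + 1), eLpNorm (fun ω => f (ω k)) p μ ^ (p : ℝ) :=
      Finset.single_le_sum (f := fun k => eLpNorm (fun ω => f (ω k)) p μ ^ (p : ℝ))
        (fun _ _ => zero_le) (Finset.self_mem_range_succ n)
    _ ≤ (M : ℝ≥0∞) ^ (p : ℝ) * (u x + (n + 1 : ℕ) * c) :=
      hμ.sum_eLpNorm_rpow_le hu hv hp hfv (n + 1)
    _ < ∞ := by finiteness

theorem sum_lpNorm_rpow_le (hμ : IsCanonicalChain P x μ) (hu : Measurable u) (hx : u x ≠ ∞)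
    (hv : ∀ y, v y + kernelOp P u y ≤ u y + c) (hp : p ≠ 0) (hf : Measurable f)
    (hfv : ∀ y, ‖f y‖ₑ ≤ M * v y ^ (1 / (p : ℝ))) (n : ℕ) :
    ∑ k ∈ Finset.range n, lpNorm (fun ω => f (ω k)) p μ ^ (p : ℝ)
      ≤ M ^ (p : ℝ) * ((u x).toReal + n * c) := by
  have hfin : (M : ℝ≥0∞) ^ (p : ℝ) * (u x + n * c) ≠ ∞ := by finiteness
  have hmem := hμ.memLp_comp_eval hu hx hv hp hf hfv
  calc
    _ = (∑ k ∈ Finset.range n, eLpNorm (fun ω => f (ω k)) p μ ^ (p : ℝ)).toReal := by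
      rw [ENNReal.toReal_sum fun k _ =>
        ENNReal.rpow_ne_top_of_nonneg p.coe_nonneg (hmem k).eLpNorm_ne_top]
      simp only [← ENNReal.toReal_rpow, toReal_eLpNorm (hmem _).aestronglyMeasurable]
    _ ≤ ((M : ℝ≥0∞) ^ (p : ℝ) * (u x + n * c)).toReal :=
      ENNReal.toReal_mono hfin (hμ.sum_eLpNorm_rpow_le hu hv hp hfv n)
    _ = M ^ (p : ℝ) * ((u x).toReal + n * c) := by
      rw [ENNReal.toReal_mul, ← ENNReal.toReal_rpow, ENNReal.toReal_add hx (by finiteness)]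
      simp

theorem sum_lpNorm_chainMartingale_succ_sub_rpow_isBigO (hμ : IsCanonicalChain P x μ)
    (hu : Measurable u) (hx : u x ≠ ∞) (hv : ∀ y, v y + kernelOp P u y ≤ u y + c) (hp : 1 ≤ p)
    (hf : Measurable f) (hfv : ∀ y, ‖f y‖ₑ ≤ M * v y ^ (1 / (p : ℝ))) :
    (fun n : ℕ => ∑ k ∈ Finset.range n,
      lpNorm (chainMartingale P f (k + 1) - chainMartingale P f k) p μ ^ (p : ℝ))
      =O[atTop] fun n => (n : ℝ) := by
  have hp₀ : p ≠ 0 := (one_pos.trans_le hp).ne'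
  have hmem := hμ.memLp_comp_eval hu hx hv hp₀ hf hfv
  set a : ℕ → ℝ := fun k => lpNorm (fun ω => f (ω k)) p μ ^ (p : ℝ)
  have ha (k : ℕ) : 0 ≤ a k := Real.rpow_nonneg lpNorm_nonneg _
  have hincrement (k : ℕ) :
      lpNorm (chainMartingale P f (k + 1) - chainMartingale P f k) p μ ^ (p : ℝ)
        ≤ 2 ^ (p : ℝ) * a (k + 1) := by
    rw [← Real.mul_rpow zero_le_two lpNorm_nonneg]
    exact Real.rpow_le_rpow lpNorm_nonneg (hμ.lpNorm_chainMartingale_succ_sub_le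
      (by exact_mod_cast hp) hf (hmem (k + 1))) p.coe_nonneg
  refine .of_bound (2 ^ (p : ℝ) * (M ^ (p : ℝ) * ((u x).toReal + 2 * c))) ?_
  filter_upwards [eventually_ge_atTop 1] with n hn
  have hn₁ : (1 : ℝ) ≤ n := by exact_mod_cast hn
  rw [Real.norm_of_nonneg (Finset.sum_nonneg fun _ _ => Real.rpow_nonneg lpNorm_nonneg _),
    Real.norm_natCast]
  calc
    _ ≤ ∑ k ∈ Finset.range n, 2 ^ (p : ℝ) * a (k + 1) := Finset.sum_le_sum fun k _ => hincrement k
    _ ≤ 2 ^ (p : ℝ) * ∑ k ∈ Finset.range (n + 1), a k := by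
      rw [← Finset.mul_sum, Finset.sum_range_succ']
      gcongr
      exact le_add_of_nonneg_right (ha 0)
    _ ≤ 2 ^ (p : ℝ) * (M ^ (p : ℝ) * ((u x).toReal + (n + 1 : ℕ) * c)) := by
      gcongr
      exact hμ.sum_lpNorm_rpow_le hu hx hv hp₀ hf hfv (n + 1)
    _ ≤ 2 ^ (p : ℝ) * (M ^ (p : ℝ) * ((u x).toReal * n + (2 * n) * c)) := by
      push_cast
      gcongr
      · exact le_mul_of_one_le_right ENNReal.toReal_nonneg hn₁
      · linarith
    _ = 2 ^ (p : ℝ) * (M ^ (p : ℝ) * ((u x).toReal + 2 * c)) * n := by ring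

end IsCanonicalChain

theorem IsDriftFunction.tsub_add_kernelOp_le {C : Set X} {b : ℝ≥0}
    (hu : IsDriftFunction P u C b) (y : X) :
    u y - kernelOp P u y + C.indicator (fun _ => (b : ℝ≥0∞)) y + kernelOp P u y
      ≤ u y + (2 * b : ℝ≥0) := by
  have hind : C.indicator (fun _ => (b : ℝ≥0∞)) y ≤ b := indicator_le_self' (by simp) y
  have hsub : u y - kernelOp P u y + kernelOp P u y
      ≤ u y + C.indicator (fun _ => (b : ℝ≥0∞)) y := by
    rw [tsub_add_eq_max]
    exact max_le le_self_add (hu.drift y)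
  calc
    _ = u y - kernelOp P u y + kernelOp P u y + C.indicator (fun _ => (b : ℝ≥0∞)) y :=
      add_right_comm _ _ _
    _ ≤ u y + b + b := add_le_add (hsub.trans (add_le_add_right hind _)) hind
    _ = u y + (2 * b : ℝ≥0) := by
      push_cast
      ring

end Chain

theorem stmt6_general {X : Type*} [MeasurableSpace X] {P : Kernel X X} {u v : X → ℝ≥0∞} {c : ℝ≥0}
    (hu : Measurable u) (hv : ∀ y, v y + kernelOp P u y ≤ u y + c) {p : ℝ} (hp : 1 < p)
    {f : X → ℝ} {M : ℝ≥0} (hf : Measurable f) (hfv : ∀ y, ‖f y‖ₑ ≤ M * v y ^ (1 / p))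
    {x : X} (hx : u x ≠ ∞) {μ : Measure (ℕ → X)} (hμ : IsCanonicalChain P x μ) :
    (∀ᵐ ω ∂μ, Tendsto
      (fun n : ℕ => (n : ℝ)⁻¹ * ∑ k ∈ Finset.range n, (f (ω (k + 1)) - kernelOpReal P f (ω k)))
      atTop (nhds 0)) ∧
    Tendsto (fun n : ℕ => eLpNorm
      (fun ω => (n : ℝ)⁻¹ * ∑ k ∈ Finset.range n, (f (ω (k + 1)) - kernelOpReal P f (ω k)))
      (ENNReal.ofReal p) μ) atTop (nhds 0) := by
  lift p to ℝ≥0 using by linarith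
  have := hμ.1
  have hp₁ : 1 < p := by exact_mod_cast hp
  have hq : (1 : ℝ≥0∞) ≤ p := by exact_mod_cast hp₁.le
  have hmem := hμ.memLp_comp_eval hu hx hv (one_pos.trans hp₁).ne' hf hfv
  have hS := hμ.martingale_chainMartingale hf fun n => (hmem n).integrable hq
  have hSp := hμ.memLp_chainMartingale hq hf hmem
  have hinc := hμ.sum_lpNorm_chainMartingale_succ_sub_rpow_isBigO hu hx hv hp₁.le hf hfv
  constructor
  · filter_upwards [ae_martingale_isLittleO hp₁ hS hSp hinc] with ω hω
    exact hω.tendsto_div_nhds_zero.congr fun _ => div_eq_inv_mul _ _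
  · rw [ENNReal.ofReal_coe_nnreal]
    exact tendsto_eLpNorm_inv_mul_of_isLittleO hSp (lpNorm_martingale_isLittleO hp₁ hS hSp hinc)

/-- (Law of large numbers for martingales dominated by drift functions.)
If `(u,C)` is a drift function, `p ∈ (1,∞)`, `f ∈ E_u^p` and `u(x) < ∞`, then
`(1/n) ∑_{k=0}^{n−1} (f(X_{k+1}) − Pf(X_k)) → 0`, `ℙ_x`-a.e. and in `L^p(ℙ_x)`. -/
theorem stmt6 {X : Type*} [MeasurableSpace X] [StandardBorelSpace X]
    (P : ProbabilityTheory.Kernel X X) [IsMarkovKernel P]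
    (u : X → ℝ≥0∞) (C : Set X) (b : ℝ≥0) (hu : IsDriftFunction P u C b)
    (p : ℝ) (hp : 1 < p)
    (f : X → ℝ) (M : ℝ≥0) (hf : MemDriftSpace P u C b p f M)
    (x : X) (hx : u x < ∞)
    (μ : Measure (ℕ → X)) (hμ : IsCanonicalChain P x μ) :
    (∀ᵐ ω ∂μ, Tendsto
      (fun n : ℕ => (n : ℝ)⁻¹ * ∑ k ∈ Finset.range n, (f (ω (k + 1)) - kernelOpReal P f (ω k)))
      atTop (nhds 0)) ∧
    Tendsto (fun n : ℕ => eLpNorm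
      (fun ω => (n : ℝ)⁻¹ * ∑ k ∈ Finset.range n, (f (ω (k + 1)) - kernelOpReal P f (ω k)))
      (ENNReal.ofReal p) μ) atTop (nhds 0) := by
  exact stmt6_general hu.measurable_u hu.tsub_add_kernelOp_le hp hf.1 hf.2 hx.ne hμ
end

section
/- Let P be a Markov kernel on a standard Borel space X, let (u,C) be a drift function with constant b, let p > 2, let g ∈ E_u^p, and let x ∈ X with u(x) < ∞. Then: (a) for every ε > 0, (1/n) ∑_{k=0}^{n−1} 𝔼_x[(g(X_{k+1}) − Pg(X_k))² · 1_{|g(X_{k+1}) − Pg(X_k)| ≥ ε√n}] → 0 as n → ∞; (b) for every ε > 0, ∑_{n=1}^{∞} n^{−1/2} 𝔼_x[|g(X_{n+1}) − Pg(X_n)| · 1_{|g(X_{n+1}) − Pg(X_n)| ≥ ε√n}] < ∞; (c) there exists δ > 0 such that ∑_{n=1}^{∞} n^{−2} 𝔼_x[(g(X_{n+1}) − Pg(X_n))⁴ · 1_{|g(X_{n+1}) − Pg(X_n)| ≤ δ√n}] < ∞. -/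
open MeasureTheory ProbabilityTheory Filter Set
open scoped ENNReal NNReal

/-!
Let `w = u - Pu + b 1_C`. Telescoping the drift inequality along the chain gives
`∑_{k<n} 𝔼_x[w(X_k)] ≤ u(x) + 2bn`. Since `|g|^p` is dominated by a multiple of `w`, Jensen's
inequality shows that the sums `∑_{k<n} 𝔼_x|D_k|^p` also grow at most linearly, and hence so do
`∑_{k<n} 𝔼_x|D_k|^q` for `0 ≤ q ≤ p`. Fix `2 < q ≤ min(p, 4)`. Each truncated moment of order `r` at
level `a` is at most `a^(r-q) 𝔼_x|D_k|^q`, for the tail `|D_k| ≥ a` when `r ≤ q` and for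
the body `|D_k| ≤ a` when `q ≤ r`. At level `a = ε√n` the average in (a) is thus `O((ε√n)^(2-q))`,
and the series in (b) and (c) are bounded by multiples of `∑ n^(-q/2) 𝔼_x|D_n|^q`, which converges
by Abel summation because `q > 2`.
-/

section AbelSummation

variable {R : Type*} [CommSemiring R] [PartialOrder R] [CanonicallyOrderedAdd R] [Sub R]
  [OrderedSub R]

lemma sum_range_mul_eq_of_antitone {a : ℕ → R} (ha : Antitone a) (c : ℕ → R) (n : ℕ) :
    ∑ k ∈ Finset.range n, a k * c k =
      a n * ∑ k ∈ Finset.range n, c k +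
        ∑ m ∈ Finset.range n, (a m - a (m + 1)) * ∑ k ∈ Finset.range (m + 1), c k := by
  induction n with
  | zero => simp
  | succ n ih =>
    have hstep : a (n + 1) + (a n - a (n + 1)) = a n := add_tsub_cancel_of_le (ha n.le_succ)
    calc ∑ k ∈ Finset.range (n + 1), a k * c k
        = a n * ∑ k ∈ Finset.range (n + 1), c k +
            ∑ m ∈ Finset.range n, (a m - a (m + 1)) * ∑ k ∈ Finset.range (m + 1), c k := by
          rw [Finset.sum_range_succ, ih, Finset.sum_range_succ c]
          ring
      _ = (a (n + 1) + (a n - a (n + 1))) * ∑ k ∈ Finset.range (n + 1), c k +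
            ∑ m ∈ Finset.range n, (a m - a (m + 1)) * ∑ k ∈ Finset.range (m + 1), c k := by
          rw [hstep]
      _ = _ := by
          rw [Finset.sum_range_succ
            (fun m => (a m - a (m + 1)) * ∑ k ∈ Finset.range (m + 1), c k)]
          ring

lemma sum_range_mul_le_sum_range_mul_of_antitone {a c d : ℕ → R} (ha : Antitone a)
    (h : ∀ n, ∑ k ∈ Finset.range n, c k ≤ ∑ k ∈ Finset.range n, d k) (n : ℕ) :
    ∑ k ∈ Finset.range n, a k * c k ≤ ∑ k ∈ Finset.range n, a k * d k := by
  rw [sum_range_mul_eq_of_antitone ha c, sum_range_mul_eq_of_antitone ha d]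
  exact add_le_add (mul_le_mul' le_rfl (h n))
    (Finset.sum_le_sum fun m _ => mul_le_mul' le_rfl (h (m + 1)))

end AbelSummation

lemma tsum_mul_le_tsum_mul_of_antitone {a c d : ℕ → ℝ≥0∞} (ha : Antitone a)
    (h : ∀ n, ∑ k ∈ Finset.range n, c k ≤ ∑ k ∈ Finset.range n, d k) :
    ∑' n, a n * c n ≤ ∑' n, a n * d n :=
  ENNReal.tsum_le_of_sum_range_le fun n =>
    (sum_range_mul_le_sum_range_mul_of_antitone ha h n).trans (ENNReal.sum_le_tsum _)

/-- The partial sums of `c` grow at most linearly: `∑_{k<n} c_k = O(n)`. The bound `K * n` at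
`n = 0` costs nothing, the empty sum being `0`. -/
def LinearPartialSums (c : ℕ → ℝ≥0∞) : Prop :=
  ∃ K : ℝ≥0, ∀ n : ℕ, ∑ k ∈ Finset.range n, c k ≤ K * n

namespace LinearPartialSums

variable {c d : ℕ → ℝ≥0∞}

lemma of_sum_range_le_add_mul (A B : ℝ≥0)
    (h : ∀ n : ℕ, ∑ k ∈ Finset.range n, c k ≤ A + B * n) : LinearPartialSums c := by
  refine ⟨A + B, fun n => ?_⟩
  rcases n.eq_zero_or_pos with rfl | hn
  · simp
  calc ∑ k ∈ Finset.range n, c k ≤ A + B * n := h n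
    _ ≤ A * n + B * n := by
        gcongr
        exact le_mul_of_one_le_right' (mod_cast hn)
    _ = ↑(A + B) * n := by push_cast; ring

lemma comp_succ (hc : LinearPartialSums c) : LinearPartialSums fun k => c (k + 1) := by
  obtain ⟨K, hK⟩ := hc
  refine of_sum_range_le_add_mul K K fun n => ?_
  calc ∑ k ∈ Finset.range n, c (k + 1)
      ≤ ∑ k ∈ Finset.range (n + 1), c k := by
        rw [Finset.sum_range_succ']
        exact le_self_add
    _ ≤ K * (n + 1 : ℕ) := hK (n + 1)
    _ = K + K * n := by push_cast; ring

lemma of_le_add_mul (hc : LinearPartialSums c) (A B : ℝ≥0) (h : ∀ k, d k ≤ A + B * c k) :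
    LinearPartialSums d := by
  obtain ⟨K, hK⟩ := hc
  refine ⟨A + B * K, fun n => ?_⟩
  calc ∑ k ∈ Finset.range n, d k ≤ ∑ k ∈ Finset.range n, (A + B * c k) :=
        Finset.sum_le_sum fun k _ => h k
    _ = A * n + B * ∑ k ∈ Finset.range n, c k := by
        rw [Finset.sum_add_distrib, ← Finset.mul_sum, Finset.sum_const, Finset.card_range,
          nsmul_eq_mul, mul_comm (n : ℝ≥0∞)]
    _ ≤ A * n + B * (K * n) := by gcongr; exact hK n
    _ = ↑(A + B * K) * n := by push_cast; ring

lemma tsum_mul_ne_top (hc : LinearPartialSums c) {a : ℕ → ℝ≥0∞} (ha : Antitone a)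
    (hsum : ∑' n, a n ≠ ∞) : ∑' n, a n * c n ≠ ∞ := by
  obtain ⟨K, hK⟩ := hc
  have hle : ∑' n, a n * c n ≤ ∑' n, a n * K :=
    tsum_mul_le_tsum_mul_of_antitone ha fun n => by simpa [mul_comm] using hK n
  rw [ENNReal.tsum_mul_right] at hle
  exact ne_top_of_le_ne_top (ENNReal.mul_ne_top hsum ENNReal.coe_ne_top) hle

lemma tendsto_inv_mul_mul_sum (hc : LinearPartialSums c) {a : ℕ → ℝ≥0∞}
    (ha : Tendsto a atTop (nhds 0)) :
    Tendsto (fun n : ℕ => (n : ℝ≥0∞)⁻¹ * (a n * ∑ k ∈ Finset.range n, c k)) atTop (nhds 0) := by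
  obtain ⟨K, hK⟩ := hc
  have hlim : Tendsto (fun n => a n * K) atTop (nhds 0) := by
    simpa using ENNReal.Tendsto.mul_const ha (Or.inr (ENNReal.coe_ne_top (r := K)))
  refine tendsto_of_tendsto_of_tendsto_of_le_of_le tendsto_const_nhds hlim
    (fun _ => zero_le) fun n => ?_
  calc (n : ℝ≥0∞)⁻¹ * (a n * ∑ k ∈ Finset.range n, c k)
      ≤ (n : ℝ≥0∞)⁻¹ * (a n * (K * n)) := by gcongr; exact hK n
    _ = a n * K * ((n : ℝ≥0∞)⁻¹ * n) := by ring
    _ ≤ a n * K := mul_le_of_le_one_right' (ENNReal.inv_mul_le_one _)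

end LinearPartialSums

section SqrtWeights

lemma ofReal_sqrt_natCast_add_one_ne_zero (n : ℕ) : ENNReal.ofReal √((n : ℝ) + 1) ≠ 0 := by
  rw [ENNReal.ofReal_ne_zero_iff]
  positivity

lemma ofReal_sqrt_sq (x : ℝ) : ENNReal.ofReal √x ^ 2 = ENNReal.ofReal x := by
  rcases le_total 0 x with hx | hx
  · rw [← ENNReal.ofReal_pow (Real.sqrt_nonneg x), Real.sq_sqrt hx]
  · simp [Real.sqrt_eq_zero_of_nonpos hx, ENNReal.ofReal_of_nonpos hx]

lemma antitone_ofReal_sqrt_rpow_neg {q : ℝ} (hq : 0 ≤ q) :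
    Antitone fun n : ℕ => ENNReal.ofReal √((n : ℝ) + 1) ^ (-q) := by
  intro m n hmn
  simp only [ENNReal.rpow_neg]
  gcongr

lemma tsum_ofReal_sqrt_rpow_neg_ne_top {q : ℝ} (hq : 2 < q) :
    ∑' n : ℕ, ENNReal.ofReal √((n : ℝ) + 1) ^ (-q) ≠ ∞ := by
  have hterm (n : ℕ) :
      ENNReal.ofReal √((n : ℝ) + 1) ^ (-q) = ENNReal.ofReal (((n + 1 : ℕ) : ℝ) ^ (-(q / 2))) := by
    have hn : (0 : ℝ) < n + 1 := by positivity
    rw [ENNReal.ofReal_rpow_of_pos (Real.sqrt_pos.2 hn), Real.sqrt_eq_rpow,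
      ← Real.rpow_mul hn.le]
    push_cast
    ring_nf
  have hsum : Summable fun n : ℕ => (n : ℝ) ^ (-(q / 2)) :=
    Real.summable_nat_rpow.2 (by linarith)
  simp only [hterm]
  exact ((summable_nat_add_iff 1).2 hsum).tsum_ofReal_ne_top

lemma LinearPartialSums.tsum_inv_sqrt_pow_mul_ne_top {c d : ℕ → ℝ≥0∞} (hc : LinearPartialSums c)
    {q ε : ℝ} (hq : 2 < q) (hε : 0 < ε) (j : ℕ)
    (h : ∀ n, d n ≤ ENNReal.ofReal (ε * √((n : ℝ) + 1)) ^ ((j : ℝ) - q) * c n) :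
    ∑' n : ℕ, (ENNReal.ofReal √((n : ℝ) + 1) ^ j)⁻¹ * d n ≠ ∞ := by
  have hconst : ENNReal.ofReal ε ^ ((j : ℝ) - q) ≠ ∞ := by
    rw [ENNReal.ofReal_rpow_of_pos hε]
    exact ENNReal.ofReal_ne_top
  have hsum := hc.tsum_mul_ne_top (antitone_ofReal_sqrt_rpow_neg (by linarith))
    (tsum_ofReal_sqrt_rpow_neg_ne_top hq)
  refine ne_top_of_le_ne_top (ENNReal.mul_ne_top hconst hsum) ?_
  rw [← ENNReal.tsum_mul_left]
  refine ENNReal.tsum_le_tsum fun n => ?_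
  have hs0 := ofReal_sqrt_natCast_add_one_ne_zero n
  replace h := h n
  rw [ENNReal.ofReal_mul hε.le] at h
  set s := ENNReal.ofReal √((n : ℝ) + 1)
  have hs : s ≠ ∞ := ENNReal.ofReal_ne_top
  have hexp : (s ^ j)⁻¹ * s ^ ((j : ℝ) - q) = s ^ (-q) := by
    rw [← ENNReal.rpow_natCast, ← ENNReal.rpow_neg, ← ENNReal.rpow_add _ _ hs0 hs]
    ring_nf
  calc (s ^ j)⁻¹ * d n ≤ (s ^ j)⁻¹ * ((ENNReal.ofReal ε * s) ^ ((j : ℝ) - q) * c n) := by gcongr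
    _ = ENNReal.ofReal ε ^ ((j : ℝ) - q) * ((s ^ j)⁻¹ * s ^ ((j : ℝ) - q) * c n) := by
        rw [ENNReal.mul_rpow_of_ne_top ENNReal.ofReal_ne_top hs]
        ring
    _ = ENNReal.ofReal ε ^ ((j : ℝ) - q) * (s ^ (-q) * c n) := by rw [hexp]

end SqrtWeights

section TruncatedMoments

lemma rpow_le_rpow_sub_mul_rpow_of_le {a t : ℝ≥0∞} {r q : ℝ} (ha0 : a ≠ 0) (ha : a ≠ ∞)
    (hat : a ≤ t) (hr : 0 ≤ r) (hrq : r ≤ q) : t ^ r ≤ a ^ (r - q) * t ^ q := by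
  have hqr : 0 ≤ q - r := sub_nonneg.2 hrq
  rw [← neg_sub q r, ENNReal.rpow_neg, ← ENNReal.mul_le_iff_le_inv
    (ENNReal.rpow_pos (pos_iff_ne_zero.2 ha0) ha).ne' (ENNReal.rpow_ne_top_of_nonneg hqr ha)]
  calc a ^ (q - r) * t ^ r ≤ t ^ (q - r) * t ^ r := by gcongr
    _ = t ^ q := by rw [← ENNReal.rpow_add_of_nonneg _ _ hqr hr, sub_add_cancel]

lemma rpow_le_rpow_sub_mul_rpow_of_ge {a t : ℝ≥0∞} {r q : ℝ} (hta : t ≤ a) (hq : 0 ≤ q)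
    (hqr : q ≤ r) : t ^ r ≤ a ^ (r - q) * t ^ q := by
  have hrq : 0 ≤ r - q := sub_nonneg.2 hqr
  calc t ^ r = t ^ (r - q) * t ^ q := by
        rw [← ENNReal.rpow_add_of_nonneg _ _ hrq hq, sub_add_cancel]
    _ ≤ a ^ (r - q) * t ^ q := by gcongr

variable {Ω E : Type*} [MeasurableSpace Ω] {μ : Measure Ω} [SeminormedAddCommGroup E]

lemma ofReal_norm_pow (x : E) (j : ℕ) : ENNReal.ofReal (‖x‖ ^ j) = ‖x‖ₑ ^ (j : ℝ) := by
  rw [ENNReal.ofReal_pow (norm_nonneg x), ofReal_norm, ENNReal.rpow_natCast]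

lemma lintegral_ofReal_tail_le {a q : ℝ} {j : ℕ} (ha : 0 < a) (hjq : j ≤ q) (f : Ω → E) :
    ∫⁻ ω, ENNReal.ofReal (if a ≤ ‖f ω‖ then ‖f ω‖ ^ j else 0) ∂μ
      ≤ ENNReal.ofReal a ^ ((j : ℝ) - q) * ∫⁻ ω, ‖f ω‖ₑ ^ q ∂μ := by
  have ha0 : ENNReal.ofReal a ≠ 0 := ENNReal.ofReal_ne_zero_iff.2 ha
  rw [← lintegral_const_mul' _ _ (ENNReal.rpow_ne_top_of_ne_zero ha0 ENNReal.ofReal_ne_top)]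
  refine lintegral_mono fun ω => ?_
  split_ifs with h
  · rw [ofReal_norm_pow]
    exact rpow_le_rpow_sub_mul_rpow_of_le ha0 ENNReal.ofReal_ne_top
      ((ENNReal.ofReal_le_ofReal h).trans_eq (ofReal_norm _)) j.cast_nonneg hjq
  · simp

lemma lintegral_ofReal_body_le {q : ℝ} {j : ℕ} (hq : 0 ≤ q) (hqj : q ≤ j) (a : ℝ) (f : Ω → E) :
    ∫⁻ ω, ENNReal.ofReal (if ‖f ω‖ ≤ a then ‖f ω‖ ^ j else 0) ∂μ
      ≤ ENNReal.ofReal a ^ ((j : ℝ) - q) * ∫⁻ ω, ‖f ω‖ₑ ^ q ∂μ := by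
  rw [← lintegral_const_mul' _ _
    (ENNReal.rpow_ne_top_of_nonneg (sub_nonneg.2 hqj) ENNReal.ofReal_ne_top)]
  refine lintegral_mono fun ω => ?_
  split_ifs with h
  · rw [ofReal_norm_pow]
    exact rpow_le_rpow_sub_mul_rpow_of_ge
      ((ofReal_norm _).symm.trans_le (ENNReal.ofReal_le_ofReal h)) hq hqj
  · simp

lemma lintegral_rpow_enorm_le_one_add [IsProbabilityMeasure μ] {q p : ℝ} (hq : 0 ≤ q)
    (hqp : q ≤ p) (f : Ω → E) :
    ∫⁻ ω, ‖f ω‖ₑ ^ q ∂μ ≤ 1 + ∫⁻ ω, ‖f ω‖ₑ ^ p ∂μ := by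
  have hpt (t : ℝ≥0∞) : t ^ q ≤ 1 + t ^ p := by
    rcases le_total t 1 with ht | ht
    · exact (ENNReal.rpow_le_one ht hq).trans le_self_add
    · exact (ENNReal.rpow_le_rpow_of_exponent_le ht hqp).trans le_add_self
  calc ∫⁻ ω, ‖f ω‖ₑ ^ q ∂μ ≤ ∫⁻ ω, (1 + ‖f ω‖ₑ ^ p) ∂μ := lintegral_mono fun ω => hpt _
    _ = 1 + ∫⁻ ω, ‖f ω‖ₑ ^ p ∂μ := by
        rw [lintegral_add_left measurable_const, lintegral_one, measure_univ]

variable {D : ℕ → Ω → E} {q : ℝ} {j : ℕ}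

lemma tendsto_inv_mul_sum_tail (hD : LinearPartialSums fun k => ∫⁻ ω, ‖D k ω‖ₑ ^ q ∂μ)
    (hjq : j < q) {t : ℕ → ℝ} (ht : Tendsto t atTop atTop) :
    Tendsto (fun n : ℕ => (n : ℝ≥0∞)⁻¹ * ∑ k ∈ Finset.range n,
      ∫⁻ ω, ENNReal.ofReal (if t n ≤ ‖D k ω‖ then ‖D k ω‖ ^ j else 0) ∂μ) atTop (nhds 0) := by
  have hlevel : Tendsto (fun n => ENNReal.ofReal (t n) ^ ((j : ℝ) - q)) atTop (nhds 0) := by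
    have htop : Tendsto (fun n => ENNReal.ofReal (t n)) atTop (nhds ∞) :=
      ENNReal.tendsto_ofReal_atTop.comp ht
    simpa [ENNReal.top_rpow_of_neg (sub_neg.2 hjq)] using htop.ennrpow_const ((j : ℝ) - q)
  refine tendsto_of_tendsto_of_tendsto_of_le_of_le' tendsto_const_nhds
    (hD.tendsto_inv_mul_mul_sum hlevel) (Eventually.of_forall fun _ => zero_le) ?_
  filter_upwards [ht.eventually_gt_atTop 0] with n hn
  rw [Finset.mul_sum _ _ (ENNReal.ofReal (t n) ^ _)]
  gcongr with k
  exact lintegral_ofReal_tail_le hn hjq.le (D k)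

lemma tsum_inv_sqrt_pow_mul_tail_ne_top
    (hD : LinearPartialSums fun k => ∫⁻ ω, ‖D k ω‖ₑ ^ q ∂μ) (hq : 2 < q) (hjq : j ≤ q)
    {ε : ℝ} (hε : 0 < ε) :
    ∑' n : ℕ, (ENNReal.ofReal √((n : ℝ) + 1) ^ j)⁻¹ * ∫⁻ ω, ENNReal.ofReal
      (if ε * √((n : ℝ) + 1) ≤ ‖D n ω‖ then ‖D n ω‖ ^ j else 0) ∂μ ≠ ∞ :=
  hD.tsum_inv_sqrt_pow_mul_ne_top hq hε j fun n =>
    lintegral_ofReal_tail_le (by positivity) hjq (D n)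

lemma tsum_inv_sqrt_pow_mul_body_ne_top
    (hD : LinearPartialSums fun k => ∫⁻ ω, ‖D k ω‖ₑ ^ q ∂μ) (hq : 2 < q) (hqj : q ≤ j)
    {δ : ℝ} (hδ : 0 < δ) :
    ∑' n : ℕ, (ENNReal.ofReal √((n : ℝ) + 1) ^ j)⁻¹ * ∫⁻ ω, ENNReal.ofReal
      (if ‖D n ω‖ ≤ δ * √((n : ℝ) + 1) then ‖D n ω‖ ^ j else 0) ∂μ ≠ ∞ :=
  hD.tsum_inv_sqrt_pow_mul_ne_top hq hδ j fun n =>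
    lintegral_ofReal_body_le (by linarith) hqj _ (D n)

end TruncatedMoments

lemma rpow_enorm_integral_le_lintegral_rpow_enorm {Ω E : Type*} [MeasurableSpace Ω]
    {ν : Measure Ω} [IsProbabilityMeasure ν] [NormedAddCommGroup E] [NormedSpace ℝ E]
    {f : Ω → E} (hf : AEStronglyMeasurable f ν) {p : ℝ} (hp : 1 ≤ p) :
    ‖∫ y, f y ∂ν‖ₑ ^ p ≤ ∫⁻ y, ‖f y‖ₑ ^ p ∂ν := by
  have hp0 : 0 < p := by linarith
  rw [lintegral_rpow_enorm_eq_rpow_eLpNorm' hp0]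
  gcongr
  calc ‖∫ y, f y ∂ν‖ₑ ≤ ∫⁻ y, ‖f y‖ₑ ∂ν := enorm_integral_le_lintegral_enorm f
    _ = eLpNorm' f 1 ν := by simp [eLpNorm']
    _ ≤ eLpNorm' f p ν := eLpNorm'_le_eLpNorm'_of_exponent_le zero_lt_one hp ν hf

section Chain

variable {X : Type*} [MeasurableSpace X] {P : ProbabilityTheory.Kernel X X}

/-- The function `w = u - Pu + b 1_C`, whose `p`-th root is the weight defining `E_u^p`. The
subtraction is truncated, so that `w = b 1_C` wherever `u < Pu` or `Pu = ∞`. -/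
noncomputable def driftWeight (P : ProbabilityTheory.Kernel X X) (u : X → ℝ≥0∞) (C : Set X)
    (b : ℝ≥0) : X → ℝ≥0∞ :=
  fun x => u x - kernelOp P u x + C.indicator (fun _ => (b : ℝ≥0∞)) x

variable {u : X → ℝ≥0∞} {C : Set X} {b : ℝ≥0} {p : ℝ} {g : X → ℝ} {M : ℝ≥0}

lemma measurable_kernelOp {f : X → ℝ≥0∞} (hf : Measurable f) : Measurable (kernelOp P f) :=
  hf.lintegral_kernel

lemma IsDriftFunction.driftWeight_add_kernelOp_le (hu : IsDriftFunction P u C b) (y : X) :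
    driftWeight P u C b y + kernelOp P u y ≤ u y + 2 * b := by
  set i := C.indicator (fun _ => (b : ℝ≥0∞)) y
  have hi : i ≤ b := indicator_le_self' (fun _ _ => zero_le) y
  calc driftWeight P u C b y + kernelOp P u y = max (u y) (kernelOp P u y) + i := by
        rw [driftWeight, add_right_comm, tsub_add_eq_max]
    _ ≤ u y + i + i := by
        gcongr
        exact max_le le_self_add (hu.drift y)
    _ ≤ u y + 2 * b := by
        rw [add_assoc, two_mul]
        gcongr

lemma MemDriftSpace.rpow_enorm_le (hg : MemDriftSpace P u C b p g M) (hp : 0 < p) (y : X) :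
    ‖g y‖ₑ ^ p ≤ (M : ℝ≥0∞) ^ p * driftWeight P u C b y := by
  calc ‖g y‖ₑ ^ p ≤ (M * driftWeight P u C b y ^ (1 / p)) ^ p :=
        ENNReal.rpow_le_rpow (hg.2 y) hp.le
    _ = (M : ℝ≥0∞) ^ p * driftWeight P u C b y := by
        rw [ENNReal.mul_rpow_of_nonneg _ _ hp.le, ← ENNReal.rpow_mul, one_div_mul_cancel hp.ne',
          ENNReal.rpow_one]

namespace IsCanonicalChain

variable {x : X} {μ : Measure (ℕ → X)}

lemma lintegral_comp_zero (hμ : IsCanonicalChain P x μ) {f : X → ℝ≥0∞} (hf : Measurable f) :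
    ∫⁻ ω, f (ω 0) ∂μ = f x := by
  rw [← lintegral_map (g := fun ω : ℕ → X => ω 0) hf (by fun_prop), hμ.2.1,
    lintegral_dirac' x hf]

lemma lintegral_comp_succ (hμ : IsCanonicalChain P x μ) {f : X → ℝ≥0∞} (hf : Measurable f)
    (n : ℕ) : ∫⁻ ω, f (ω (n + 1)) ∂μ = ∫⁻ ω, kernelOp P f (ω n) ∂μ := by
  simpa using hμ.2.2 n f hf (fun _ => 1) measurable_const

lemma sum_lintegral_driftWeight_add_le (hμ : IsCanonicalChain P x μ)
    (hu : IsDriftFunction P u C b) (n : ℕ) :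
    ∑ k ∈ Finset.range n, ∫⁻ ω, driftWeight P u C b (ω k) ∂μ + ∫⁻ ω, u (ω n) ∂μ
      ≤ u x + 2 * b * n := by
  have := hμ.1
  induction n with
  | zero => simp [hμ.lintegral_comp_zero hu.measurable_u]
  | succ n ih =>
    have hPu : Measurable fun ω : ℕ → X => kernelOp P u (ω n) :=
      (measurable_kernelOp hu.measurable_u).comp (by fun_prop)
    have hstep : ∫⁻ ω, driftWeight P u C b (ω n) ∂μ + ∫⁻ ω, u (ω (n + 1)) ∂μ
        ≤ ∫⁻ ω, u (ω n) ∂μ + 2 * b :=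
      calc ∫⁻ ω, driftWeight P u C b (ω n) ∂μ + ∫⁻ ω, u (ω (n + 1)) ∂μ
          = ∫⁻ ω, (driftWeight P u C b (ω n) + kernelOp P u (ω n)) ∂μ := by
            rw [hμ.lintegral_comp_succ hu.measurable_u, lintegral_add_right _ hPu]
        _ ≤ ∫⁻ ω, (u (ω n) + 2 * b) ∂μ :=
            lintegral_mono fun ω => hu.driftWeight_add_kernelOp_le (ω n)
        _ = ∫⁻ ω, u (ω n) ∂μ + 2 * b := by
            rw [lintegral_add_right _ measurable_const, lintegral_const, measure_univ, mul_one]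
    rw [Finset.sum_range_succ, add_assoc]
    calc _ ≤ ∑ k ∈ Finset.range n, ∫⁻ ω, driftWeight P u C b (ω k) ∂μ
          + (∫⁻ ω, u (ω n) ∂μ + 2 * b) := by gcongr
      _ ≤ u x + 2 * b * n + 2 * b := by
          rw [← add_assoc]
          gcongr
      _ = u x + 2 * b * (n + 1 : ℕ) := by push_cast; ring

lemma linearPartialSums_driftWeight (hμ : IsCanonicalChain P x μ) (hu : IsDriftFunction P u C b)
    (hx : u x < ∞) : LinearPartialSums fun k => ∫⁻ ω, driftWeight P u C b (ω k) ∂μ := by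
  refine .of_sum_range_le_add_mul (u x).toNNReal (2 * b) fun n => ?_
  rw [ENNReal.coe_toNNReal hx.ne]
  exact_mod_cast le_self_add.trans (hμ.sum_lintegral_driftWeight_add_le hu n)

lemma lintegral_rpow_enorm_increment_le [IsMarkovKernel P] (hμ : IsCanonicalChain P x μ)
    (hg : Measurable g) (hp : 1 ≤ p) (k : ℕ) :
    ∫⁻ ω, ‖g (ω (k + 1)) - kernelOpReal P g (ω k)‖ₑ ^ p ∂μ
      ≤ 2 ^ p * ∫⁻ ω, ‖g (ω (k + 1))‖ₑ ^ p ∂μ := by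
  have hgp : Measurable fun y => ‖g y‖ₑ ^ p := by fun_prop
  have hPg (y : X) : ‖kernelOpReal P g y‖ₑ ^ p ≤ kernelOp P (fun z => ‖g z‖ₑ ^ p) y :=
    rpow_enorm_integral_le_lintegral_rpow_enorm hg.aestronglyMeasurable hp
  have hpt (y z : X) : ‖g z - kernelOpReal P g y‖ₑ ^ p
      ≤ 2 ^ (p - 1) * (‖g z‖ₑ ^ p + kernelOp P (fun z => ‖g z‖ₑ ^ p) y) :=
    calc ‖g z - kernelOpReal P g y‖ₑ ^ p ≤ (‖g z‖ₑ + ‖kernelOpReal P g y‖ₑ) ^ p := by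
          gcongr
          exact enorm_sub_le
      _ ≤ 2 ^ (p - 1) * (‖g z‖ₑ ^ p + ‖kernelOpReal P g y‖ₑ ^ p) :=
          ENNReal.rpow_add_le_mul_rpow_add_rpow _ _ hp
      _ ≤ _ := by
          gcongr
          exact hPg y
  calc _ ≤ ∫⁻ ω, 2 ^ (p - 1) *
          (‖g (ω (k + 1))‖ₑ ^ p + kernelOp P (fun z => ‖g z‖ₑ ^ p) (ω k)) ∂μ :=
        lintegral_mono fun ω => hpt _ _
    _ = 2 ^ (p - 1) * (2 * ∫⁻ ω, ‖g (ω (k + 1))‖ₑ ^ p ∂μ) := by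
        rw [lintegral_const_mul' _ _ (by simp), lintegral_add_left (by fun_prop),
          ← hμ.lintegral_comp_succ hgp, two_mul]
    _ = 2 ^ p * ∫⁻ ω, ‖g (ω (k + 1))‖ₑ ^ p ∂μ := by
        nth_rw 2 [← ENNReal.rpow_one 2]
        rw [← mul_assoc, ← ENNReal.rpow_add _ _ two_ne_zero ENNReal.ofNat_ne_top, sub_add_cancel]

lemma linearPartialSums_increment [IsMarkovKernel P] (hμ : IsCanonicalChain P x μ)
    (hu : IsDriftFunction P u C b) (hx : u x < ∞) (hg : MemDriftSpace P u C b p g M)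
    (hp : 1 ≤ p) {q : ℝ} (hq : 0 ≤ q) (hqp : q ≤ p) :
    LinearPartialSums fun k => ∫⁻ ω, ‖g (ω (k + 1)) - kernelOpReal P g (ω k)‖ₑ ^ q ∂μ := by
  have := hμ.1
  have hp0 : 0 < p := by linarith
  have hMp : (M : ℝ≥0∞) ^ p ≠ ∞ := ENNReal.rpow_ne_top_of_nonneg hp0.le ENNReal.coe_ne_top
  refine (hμ.linearPartialSums_driftWeight hu hx).comp_succ.of_le_add_mul 1 (2 ^ p * M ^ p)
    fun k => ?_
  calc ∫⁻ ω, ‖g (ω (k + 1)) - kernelOpReal P g (ω k)‖ₑ ^ q ∂μ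
      ≤ 1 + ∫⁻ ω, ‖g (ω (k + 1)) - kernelOpReal P g (ω k)‖ₑ ^ p ∂μ :=
        lintegral_rpow_enorm_le_one_add hq hqp _
    _ ≤ 1 + 2 ^ p * ∫⁻ ω, ‖g (ω (k + 1))‖ₑ ^ p ∂μ := by
        gcongr
        exact hμ.lintegral_rpow_enorm_increment_le hg.1 hp k
    _ ≤ 1 + 2 ^ p * ∫⁻ ω, (M : ℝ≥0∞) ^ p * driftWeight P u C b (ω (k + 1)) ∂μ := by
        gcongr with ω
        exact hg.rpow_enorm_le hp0 (ω (k + 1))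
    _ = (1 : ℝ≥0) + ((2 ^ p * M ^ p : ℝ≥0) : ℝ≥0∞)
          * ∫⁻ ω, driftWeight P u C b (ω (k + 1)) ∂μ := by
        rw [lintegral_const_mul' _ _ hMp]
        push_cast [ENNReal.coe_rpow_of_nonneg _ hp0.le]
        ring

end IsCanonicalChain

end Chain

theorem stmt8_general {X : Type*} [MeasurableSpace X]
    (P : ProbabilityTheory.Kernel X X) [IsMarkovKernel P]
    (u : X → ℝ≥0∞) (C : Set X) (b : ℝ≥0) (hu : IsDriftFunction P u C b)
    (p : ℝ) (hp : 2 < p)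
    (g : X → ℝ) (M : ℝ≥0) (hg : MemDriftSpace P u C b p g M)
    (x : X) (hx : u x < ∞)
    (μ : Measure (ℕ → X)) (hμ : IsCanonicalChain P x μ)
    (D : ℕ → (ℕ → X) → ℝ) (hD : ∀ k ω, D k ω = g (ω (k + 1)) - kernelOpReal P g (ω k)) :
    (∀ ε : ℝ, 0 < ε → Tendsto
      (fun n : ℕ => (n : ℝ≥0∞)⁻¹ * ∑ k ∈ Finset.range n,
        ∫⁻ ω, ENNReal.ofReal
          (if ε * Real.sqrt n ≤ |D k ω| then (D k ω) ^ 2 else 0) ∂μ)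
      atTop (nhds 0)) ∧
    (∀ ε : ℝ, 0 < ε →
      (∑' n : ℕ, (ENNReal.ofReal (Real.sqrt (n + 1)))⁻¹ *
        ∫⁻ ω, ENNReal.ofReal
          (if ε * Real.sqrt (n + 1) ≤ |D (n + 1) ω| then |D (n + 1) ω| else 0) ∂μ) ≠ ∞) ∧
    (∀ δ : ℝ, 0 < δ →
      (∑' n : ℕ, (((n : ℝ≥0∞) + 1) ^ 2)⁻¹ *
        ∫⁻ ω, ENNReal.ofReal
          (if |D (n + 1) ω| ≤ δ * Real.sqrt (n + 1) then (D (n + 1) ω) ^ 4 else 0) ∂μ) ≠ ∞) := by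
  obtain ⟨q, hq2, hqp, hq4⟩ : ∃ q, 2 < q ∧ q ≤ p ∧ q ≤ 4 :=
    ⟨min p 4, lt_min hp (by norm_num), min_le_left p 4, min_le_right p 4⟩
  have hmom : LinearPartialSums fun k => ∫⁻ ω, ‖D k ω‖ₑ ^ q ∂μ := by
    simp only [hD]
    exact hμ.linearPartialSums_increment hu hx hg (by linarith) (by linarith) hqp
  refine ⟨fun ε hε => ?_, fun ε hε => ?_, fun δ hδ => ?_⟩
  · have hlevel : Tendsto (fun n : ℕ => ε * √(n : ℝ)) atTop atTop :=
      (Real.tendsto_sqrt_atTop.comp tendsto_natCast_atTop_atTop).const_mul_atTop hε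
    simpa using tendsto_inv_mul_sum_tail (j := 2) hmom (mod_cast hq2) hlevel
  · simpa using tsum_inv_sqrt_pow_mul_tail_ne_top (j := 1) hmom.comp_succ hq2
      (by push_cast; linarith) hε
  · have hweight (n : ℕ) : ENNReal.ofReal √((n : ℝ) + 1) ^ 4 = ((n : ℝ≥0∞) + 1) ^ 2 := by
      rw [pow_mul _ 2 2, ofReal_sqrt_sq]
      norm_cast
    simpa [hweight, Even.pow_abs (n := 4) (by decide)] using
      tsum_inv_sqrt_pow_mul_body_ne_top (j := 4) hmom.comp_succ hq2 (mod_cast hq4) hδ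

open Classical in
/-- (Lindeberg-type conditions for martingale increments dominated by a drift
function.) With `D_k = g(X_{k+1}) − Pg(X_k)`: (a) `(1/n) ∑_{k<n} 𝔼_x[D_k² 1_{|D_k| ≥ ε√n}] → 0`;
(b) `∑_{n≥1} n^{−1/2} 𝔼_x[|D_n| 1_{|D_n| ≥ ε√n}] < ∞`;
(c) for some `δ > 0`, `∑_{n≥1} n^{−2} 𝔼_x[D_n⁴ 1_{|D_n| ≤ δ√n}] < ∞`. -/
theorem stmt8 {X : Type*} [MeasurableSpace X] [StandardBorelSpace X]
    (P : ProbabilityTheory.Kernel X X) [IsMarkovKernel P]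
    (u : X → ℝ≥0∞) (C : Set X) (b : ℝ≥0) (hu : IsDriftFunction P u C b)
    (p : ℝ) (hp : 2 < p)
    (g : X → ℝ) (M : ℝ≥0) (hg : MemDriftSpace P u C b p g M)
    (x : X) (hx : u x < ∞)
    (μ : Measure (ℕ → X)) (hμ : IsCanonicalChain P x μ)
    (D : ℕ → (ℕ → X) → ℝ) (hD : ∀ k ω, D k ω = g (ω (k + 1)) - kernelOpReal P g (ω k)) :
    (∀ ε : ℝ, 0 < ε → Tendsto
      (fun n : ℕ => (n : ℝ≥0∞)⁻¹ * ∑ k ∈ Finset.range n,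
        ∫⁻ ω, ENNReal.ofReal
          (if ε * Real.sqrt n ≤ |D k ω| then (D k ω) ^ 2 else 0) ∂μ)
      atTop (nhds 0)) ∧
    (∀ ε : ℝ, 0 < ε →
      (∑' n : ℕ, (ENNReal.ofReal (Real.sqrt (n + 1)))⁻¹ *
        ∫⁻ ω, ENNReal.ofReal
          (if ε * Real.sqrt (n + 1) ≤ |D (n + 1) ω| then |D (n + 1) ω| else 0) ∂μ) ≠ ∞) ∧
    (∃ δ : ℝ, 0 < δ ∧
      (∑' n : ℕ, (((n : ℝ≥0∞) + 1) ^ 2)⁻¹ *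
        ∫⁻ ω, ENNReal.ofReal
          (if |D (n + 1) ω| ≤ δ * Real.sqrt (n + 1) then (D (n + 1) ω) ^ 4 else 0) ∂μ) ≠ ∞) := by
  obtain ⟨htail2, htail1, hbody⟩ := stmt8_general P u C b hu p hp g M hg x hx μ hμ D hD
  exact ⟨htail2, htail1, 1, one_pos, hbody 1 one_pos⟩
end
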